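/- arXiv:2109.14533 — 5 statements merged into one kernel-verified Lean document; each statement's English description precedes it below -/
import Mathlib

section
/- Let k ≥ 4 be an integer. Then the sequence 0 → Σ_I(T̂) →(curl) V_I(T̂) →(div) Q_I(T̂) → 0 is exact; that is: (i) curl maps Σ_I(T̂) into V_I(T̂) and is injective on Σ_I(T̂); (ii) the kernel of div restricted to V_I(T̂) equals curl Σ_I(T̂); and (iii) div maps V_I(T̂) onto Q_I(T̂). -/
/-!
The interior sequence `0 → Σ_I → V_I → Q_I → 0` on the reference triangle is exact.

Everything is transported to `MvPolynomial (Fin 2) ℝ` through the evaluation map `ev`, under which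
`curl` and `div` become formal partial derivatives.

*Exactness at `Σ_I` and `V_I`.* Two elements of `Σ_I` with the same curl have the same gradient and
agree at the origin, hence coincide. A divergence-free polynomial field is the curl of a polynomial
`φ` with `φ(0,0) = 0` (`exists_potential`, by integrating first in `y`, then in `x`). If the field
vanishes on the boundary, then so does the gradient of `φ`, so `φ` is constant along each edge and
therefore zero on the boundary (`eq_zero_on_frontier`).

*The range of `div` lies in `Q_I`.* The mean value vanishes by integrating along lines
(`integral_pderiv_zero`, `integral_pderiv_one`). At a vertex, a function vanishing on both adjacent
edges has zero derivative in two independent directions, hence zero gradient (`pderiv_vertex`).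

*Surjectivity of `div`.* Let `b = xy(1 - x - y)`, which vanishes on the boundary. The claim is that
every `q` of degree at most `m + 2` with zero mean and zero vertex values is `div (b w)` with `w` of
degree at most `m` (`mem_divRange_of_meanVertexZero`); it is proved by induction on `m`. In the
inductive step the top-degree part of `q` is removed (`restrict_succ_le`). The leading part of `b`
is `-xy(x + y)`: radial fields `w = p · (x, y)` hit all multiples of `xy(x + y)` in top degree by
Euler's identity, and the three directions left over are hit by `w = (0, x^{m+1})`, `(y^{m+1}, 0)`
and `(0, x^m y)`. The remainder inherits the mean and vertex conditions, since every divergence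
satisfies them. In the base case of quadratics, reduction modulo `∂ₓb` and `∂ᵧb` leaves
`α + βx + γy + δxy`, which the four conditions force to be zero (`meanVertexZero_two`).
-/

open MeasureTheory Matrix

noncomputable section

/-- The reference triangle `T̂ = {(x,y) : 0 ≤ x, 0 ≤ y, x + y ≤ 1}`. -/
def Tref : Set (ℝ × ℝ) := {z : ℝ × ℝ | 0 ≤ z.1 ∧ 0 ≤ z.2 ∧ z.1 + z.2 ≤ 1}

/-- Real polynomial functions on `ℝ²` of total degree at most `k`. -/
def PolyFun (k : ℕ) : Set ((ℝ × ℝ) → ℝ) :=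
  {f | ∃ P : MvPolynomial (Fin 2) ℝ, P.totalDegree ≤ k ∧
    ∀ z : ℝ × ℝ, f z = MvPolynomial.eval ![z.1, z.2] P}

/-- `curl φ = (∂φ/∂y, −∂φ/∂x)`. -/
def pcurl (φ : (ℝ × ℝ) → ℝ) : (ℝ × ℝ) → ℝ × ℝ :=
  fun z => (fderiv ℝ φ z (0, 1), -(fderiv ℝ φ z (1, 0)))

/-- `div v = ∂v₁/∂x + ∂v₂/∂y`. -/
def pdiv (v : (ℝ × ℝ) → ℝ × ℝ) : (ℝ × ℝ) → ℝ :=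
  fun z => fderiv ℝ (fun w => (v w).1) z (1, 0) + fderiv ℝ (fun w => (v w).2) z (0, 1)

/-- `Σ_I(T̂)`: polynomials of degree at most `k+1` with vanishing value and gradient on `∂T̂`. -/
def SigmaI (k : ℕ) : Set ((ℝ × ℝ) → ℝ) :=
  {φ | φ ∈ PolyFun (k + 1) ∧ ∀ z ∈ frontier Tref, φ z = 0 ∧ fderiv ℝ φ z = 0}

/-- `V_I(T̂)`: pairs of polynomials of degree at most `k` vanishing on `∂T̂`. -/
def VI (k : ℕ) : Set ((ℝ × ℝ) → ℝ × ℝ) :=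
  {v | (fun z => (v z).1) ∈ PolyFun k ∧ (fun z => (v z).2) ∈ PolyFun k ∧
    ∀ z ∈ frontier Tref, v z = 0}

/-- `Q_I(T̂)`: polynomials of degree at most `k−1` with vanishing mean over `T̂` and vanishing
value at the three vertices. -/
def QI (k : ℕ) : Set ((ℝ × ℝ) → ℝ) :=
  {q | q ∈ PolyFun (k - 1) ∧ (∫ z in Tref, q z) = 0 ∧
    q (0, 0) = 0 ∧ q (1, 0) = 0 ∧ q (0, 1) = 0}

/-! ### Polynomial functions on the plane and the polynomial Poincaré lemma -/

open MvPolynomial in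
/-- The polynomial function on `ℝ × ℝ` attached to a polynomial in two variables. -/
def ev (P : MvPolynomial (Fin 2) ℝ) (z : ℝ × ℝ) : ℝ := eval ![z.1, z.2] P

section Polynomials

open MvPolynomial

theorem mem_polyFun {k : ℕ} {f : ℝ × ℝ → ℝ} :
    f ∈ PolyFun k ↔ ∃ P : MvPolynomial (Fin 2) ℝ, P.totalDegree ≤ k ∧ f = ev P := by
  simp [PolyFun, ev, funext_iff]

theorem ev_injective {P Q : MvPolynomial (Fin 2) ℝ} (h : ev P = ev Q) : P = Q := by
  refine MvPolynomial.funext fun x => ?_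
  have := congrFun h (x 0, x 1)
  have hx : ![x 0, x 1] = x := by ext i; fin_cases i <;> rfl
  simpa [ev, hx] using this

theorem hasFDerivAt_ev (P : MvPolynomial (Fin 2) ℝ) (z : ℝ × ℝ) :
    HasFDerivAt (ev P) (ev (pderiv 0 P) z • ContinuousLinearMap.fst ℝ ℝ ℝ +
      ev (pderiv 1 P) z • ContinuousLinearMap.snd ℝ ℝ ℝ) z := by
  induction P using MvPolynomial.induction_on with
  | C a =>
    have : ev (C a) = fun _ => a := by funext w; simp [ev]
    rw [this]
    exact (hasFDerivAt_const a z).congr_fderiv (by ext <;> simp [ev])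
  | add p q hp hq =>
    have : ev (p + q) = fun w => ev p w + ev q w := by funext w; simp [ev]
    rw [this]
    exact (hp.add hq).congr_fderiv (by ext <;> simp [ev])
  | mul_X p i hp =>
    have hX : HasFDerivAt (ev (X i)) (ev (pderiv 0 (X i)) z • ContinuousLinearMap.fst ℝ ℝ ℝ +
        ev (pderiv 1 (X i)) z • ContinuousLinearMap.snd ℝ ℝ ℝ) z := by
      fin_cases i
      · have : ev (X 0) = Prod.fst := by funext w; simp [ev]
        simp only [Fin.zero_eta, this]
        exact hasFDerivAt_fst.congr_fderiv (by ext <;> simp [ev, pderiv_X])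
      · have : ev (X 1) = Prod.snd := by funext w; simp [ev]
        simp only [Fin.mk_one, this]
        exact hasFDerivAt_snd.congr_fderiv (by ext <;> simp [ev, pderiv_X])
    have : ev (p * X i) = fun w => ev p w * ev (X i) w := by funext w; simp [ev]
    rw [this]
    refine (hp.mul hX).congr_fderiv ?_
    ext <;> simp [ev]

theorem differentiable_ev (P : MvPolynomial (Fin 2) ℝ) : Differentiable ℝ (ev P) :=
  fun z => (hasFDerivAt_ev P z).differentiableAt

theorem continuous_ev (P : MvPolynomial (Fin 2) ℝ) : Continuous (ev P) :=
  (differentiable_ev P).continuous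

theorem fderiv_ev (P : MvPolynomial (Fin 2) ℝ) (z d : ℝ × ℝ) :
    fderiv ℝ (ev P) z d = ev (pderiv 0 P) z * d.1 + ev (pderiv 1 P) z * d.2 := by
  rw [(hasFDerivAt_ev P z).fderiv]; simp

theorem pcurl_ev (P : MvPolynomial (Fin 2) ℝ) :
    pcurl (ev P) = fun z => (ev (pderiv 1 P) z, ev (-pderiv 0 P) z) := by
  funext z; simp [pcurl, fderiv_ev, ev]

theorem pdiv_ev (P Q : MvPolynomial (Fin 2) ℝ) :
    pdiv (fun z => (ev P z, ev Q z)) = ev (pderiv 0 P + pderiv 1 Q) := by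
  have h : ∀ R : MvPolynomial (Fin 2) ℝ, (fun w => ev R w) = ev R := fun R => rfl
  funext z; simp [pdiv, h, fderiv_ev]; simp [ev]

theorem monomial_eq_X (m : Fin 2 →₀ ℕ) (c : ℝ) :
    monomial m c = C c * ((X 0 : MvPolynomial (Fin 2) ℝ) ^ m 0 * X 1 ^ m 1) := by
  rw [monomial_eq, Finsupp.prod_fintype _ _ (by simp), Fin.prod_univ_two]

theorem degree_eq (m : Fin 2 →₀ ℕ) : (m.sum fun _ e => e) = m 0 + m 1 := by
  rw [Finsupp.sum_fintype _ _ (by simp), Fin.sum_univ_two]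

/-- A submodule containing all `x^i y^j` with `i + j ≤ n` contains all polynomials of total degree
at most `n`. -/
theorem restrictTotalDegree_le {n : ℕ} {M : Submodule ℝ (MvPolynomial (Fin 2) ℝ)}
    (h : ∀ i j : ℕ, i + j ≤ n → (X 0 ^ i * X 1 ^ j : MvPolynomial (Fin 2) ℝ) ∈ M) :
    restrictTotalDegree (Fin 2) ℝ n ≤ M := by
  intro P hP
  rw [mem_restrictTotalDegree] at hP
  rw [P.as_sum]
  refine M.sum_mem fun m hm => ?_
  rw [monomial_eq_X, ← smul_eq_C_mul]
  refine M.smul_mem _ (h _ _ ?_)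
  rw [← degree_eq]
  exact (le_totalDegree hm).trans hP

theorem X_pow_mem {i j n : ℕ} (h : i + j ≤ n) :
    (X 0 ^ i * X 1 ^ j : MvPolynomial (Fin 2) ℝ) ∈ restrictTotalDegree (Fin 2) ℝ n := by
  rw [mem_restrictTotalDegree]
  refine (totalDegree_mul _ _).trans ?_
  simpa [totalDegree_X_pow] using h

theorem pderiv_mem {n : ℕ} (i : Fin 2) {P : MvPolynomial (Fin 2) ℝ}
    (hP : P ∈ restrictTotalDegree (Fin 2) ℝ n) :
    pderiv i P ∈ restrictTotalDegree (Fin 2) ℝ (n - 1) := by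
  revert P
  suffices restrictTotalDegree (Fin 2) ℝ n ≤
      (restrictTotalDegree (Fin 2) ℝ (n - 1)).comap (pderiv i).toLinearMap from fun P hP => this hP
  refine restrictTotalDegree_le fun a b hab => ?_
  have hm : ∀ (c d : ℕ) (r : ℝ), c + d ≤ n - 1 →
      (C r * (X 0 ^ c * X 1 ^ d) : MvPolynomial (Fin 2) ℝ) ∈
        restrictTotalDegree (Fin 2) ℝ (n - 1) := fun c d r h => by
    rw [← smul_eq_C_mul]
    exact Submodule.smul_mem _ _ (X_pow_mem h)
  change pderiv i (X 0 ^ a * X 1 ^ b) ∈ restrictTotalDegree (Fin 2) ℝ (n - 1)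
  fin_cases i
  · rcases a with _ | a
    · simp [pderiv_X]
    · convert hm a b (a + 1) (by omega) using 1
      simp [pderiv_X]; ring
  · rcases b with _ | b
    · simp [pderiv_X]
    · convert hm a b (b + 1) (by omega) using 1
      simp [pderiv_X]; ring

theorem pderiv_comm (i j : Fin 2) (P : MvPolynomial (Fin 2) ℝ) :
    pderiv i (pderiv j P) = pderiv j (pderiv i P) := by
  ext m
  simp only [coeff_pderiv, Finsupp.add_apply, add_assoc, add_comm (Finsupp.single i 1)]
  rcases eq_or_ne i j with rfl | h
  · rfl
  · simp [h, h.symm]; ring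

/-- The polynomial antiderivative in the `i`-th variable that vanishes where that variable is `0`. -/
def antideriv (i : Fin 2) : MvPolynomial (Fin 2) ℝ →ₗ[ℝ] MvPolynomial (Fin 2) ℝ :=
  (basisMonomials (Fin 2) ℝ).constr ℝ fun m =>
    monomial (m + Finsupp.single i 1) ((m i + 1 : ℝ)⁻¹)

theorem antideriv_monomial (i : Fin 2) (m : Fin 2 →₀ ℕ) (c : ℝ) :
    antideriv i (monomial m c) = monomial (m + Finsupp.single i 1) (c * (m i + 1 : ℝ)⁻¹) := by
  have h := (basisMonomials (Fin 2) ℝ).constr_basis ℝ (fun m : Fin 2 →₀ ℕ =>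
    (monomial (m + Finsupp.single i 1) ((m i + 1 : ℝ)⁻¹) : MvPolynomial (Fin 2) ℝ)) m
  have hc : (monomial m c : MvPolynomial (Fin 2) ℝ) = c • basisMonomials (Fin 2) ℝ m := by
    simp [smul_monomial]
  rw [hc, map_smul, antideriv, h, smul_monomial, smul_eq_mul]

theorem pderiv_antideriv (i : Fin 2) (P : MvPolynomial (Fin 2) ℝ) :
    pderiv i (antideriv i P) = P := by
  induction P using MvPolynomial.induction_on' with
  | monomial m c =>
    rw [antideriv_monomial, pderiv_monomial]
    have : (m i + 1 : ℝ) ≠ 0 := by positivity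
    simp [this]
  | add p q hp hq => rw [map_add, map_add, hp, hq]

theorem pderiv_antideriv_of_ne {i j : Fin 2} (h : i ≠ j) (P : MvPolynomial (Fin 2) ℝ) :
    pderiv j (antideriv i P) = antideriv i (pderiv j P) := by
  induction P using MvPolynomial.induction_on' with
  | monomial m c =>
    simp only [antideriv_monomial, pderiv_monomial]
    rcases Nat.eq_zero_or_pos (m j) with h0 | h0
    · simp [h0, h]
    · have hm : m + Finsupp.single i 1 - Finsupp.single j 1 =
          m - Finsupp.single j 1 + Finsupp.single i 1 := by
        ext l
        by_cases hl : j = l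
        · subst hl; simp [h]
        · simp [hl]
      rw [hm]
      simp [h, h.symm]
      ring_nf
  | add p q hp hq => simp only [map_add, hp, hq]

theorem antideriv_mem {n : ℕ} (i : Fin 2) {P : MvPolynomial (Fin 2) ℝ}
    (hP : P ∈ restrictTotalDegree (Fin 2) ℝ n) :
    antideriv i P ∈ restrictTotalDegree (Fin 2) ℝ (n + 1) := by
  rw [mem_restrictTotalDegree] at hP
  rw [P.as_sum, map_sum]
  refine Submodule.sum_mem _ fun m hm => ?_
  rw [antideriv_monomial, mem_restrictTotalDegree]
  refine (totalDegree_monomial_le _ _).trans ?_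
  have h1 := (le_totalDegree hm).trans hP
  rw [degree_eq] at h1
  have h2 := degree_eq (m + Finsupp.single i 1)
  change (Finsupp.sum (m + Finsupp.single i 1) fun _ e => e) ≤ n + 1
  rw [h2]
  fin_cases i <;> simp <;> omega

/-- The polynomial Poincaré lemma: a divergence-free field of degree at most `k` is the curl of a
polynomial of degree at most `k + 1` vanishing at the origin. -/
theorem exists_potential {k : ℕ} {P Q : MvPolynomial (Fin 2) ℝ}
    (hP : P ∈ restrictTotalDegree (Fin 2) ℝ k) (hQ : Q ∈ restrictTotalDegree (Fin 2) ℝ k)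
    (h : pderiv 0 P + pderiv 1 Q = 0) :
    ∃ R ∈ restrictTotalDegree (Fin 2) ℝ (k + 1),
      pderiv 1 R = P ∧ -pderiv 0 R = Q ∧ ev R (0, 0) = 0 := by
  -- Integrate `P` in `y`; what remains of `Q` is independent of `y` and is integrated in `x`.
  set A := antideriv 1 P
  have hA : A ∈ restrictTotalDegree (Fin 2) ℝ (k + 1) := antideriv_mem 1 hP
  set G := -Q - pderiv 0 A
  have hG : G ∈ restrictTotalDegree (Fin 2) ℝ k :=
    Submodule.sub_mem _ (Submodule.neg_mem _ hQ) (pderiv_mem 0 hA)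
  have hG0 : pderiv 1 G = 0 := by
    simp only [G, A, map_sub, map_neg]
    rw [pderiv_comm, pderiv_antideriv]
    linear_combination -h
  set R := A + antideriv 0 G
  have hR : R ∈ restrictTotalDegree (Fin 2) ℝ (k + 1) :=
    Submodule.add_mem _ hA (antideriv_mem 0 hG)
  refine ⟨R - C (ev R (0, 0)), Submodule.sub_mem _ hR ?_, ?_, ?_, ?_⟩
  · simp [mem_restrictTotalDegree]
  · simp only [R, A, map_sub, map_add, pderiv_C, pderiv_antideriv]
    rw [pderiv_antideriv_of_ne (by decide), hG0]; simp
  · simp only [R, map_sub, map_add, pderiv_C, pderiv_antideriv, G]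
    ring
  · simp [ev]

end Polynomials

/-! ### The reference triangle: boundary, edges and integration -/

theorem isClosed_Tref : IsClosed Tref :=
  (isClosed_le continuous_const continuous_fst).inter
    ((isClosed_le continuous_const continuous_snd).inter
      (isClosed_le (continuous_fst.add continuous_snd) continuous_const))

theorem isCompact_Tref : IsCompact Tref := by
  refine (isCompact_Icc (a := ((0 : ℝ), (0 : ℝ))) (b := ((1 : ℝ), (1 : ℝ)))).of_isClosed_subset
    isClosed_Tref ?_
  rintro ⟨x, y⟩ ⟨h1, h2, h3⟩
  simp only at h1 h2 h3
  exact ⟨⟨h1, h2⟩, ⟨by simp only; linarith, by simp only; linarith⟩⟩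

theorem interior_Tref : interior Tref = {z : ℝ × ℝ | 0 < z.1 ∧ 0 < z.2 ∧ z.1 + z.2 < 1} := by
  have h : Tref = Prod.fst ⁻¹' Set.Ici (0 : ℝ) ∩ (Prod.snd ⁻¹' Set.Ici (0 : ℝ) ∩
      (fun z : ℝ × ℝ => z.1 + z.2) ⁻¹' Set.Iic (1 : ℝ)) := by
    ext z; simp [Tref]
  have hsum : IsOpenMap (fun z : ℝ × ℝ => z.1 + z.2) :=
    (ContinuousLinearMap.fst ℝ ℝ ℝ + ContinuousLinearMap.snd ℝ ℝ ℝ).isOpenMap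
      fun t => ⟨(t, 0), by simp⟩
  rw [h, interior_inter, interior_inter,
    ← isOpenMap_fst.preimage_interior_eq_interior_preimage continuous_fst,
    ← isOpenMap_snd.preimage_interior_eq_interior_preimage continuous_snd,
    ← hsum.preimage_interior_eq_interior_preimage (continuous_fst.add continuous_snd),
    interior_Ici, interior_Iic]
  ext z; simp

/-- The boundary of the triangle is where the product of the barycentric coordinates vanishes. -/
theorem mem_frontier_Tref {z : ℝ × ℝ} :
    z ∈ frontier Tref ↔ z ∈ Tref ∧ z.1 * z.2 * (1 - z.1 - z.2) = 0 := by
  rw [isClosed_Tref.frontier_eq, interior_Tref, Set.mem_sdiff]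
  refine and_congr_right fun ⟨h1, h2, h3⟩ => ⟨fun h => ?_, fun h hz => ?_⟩
  · by_contra hne
    simp only [mul_eq_zero, not_or] at hne
    exact h ⟨lt_of_le_of_ne h1 (Ne.symm hne.1.1), lt_of_le_of_ne h2 (Ne.symm hne.1.2),
      lt_of_le_of_ne h3 fun h' => hne.2 (by linarith)⟩
  · obtain ⟨a, b, c⟩ := hz
    have : 0 < z.1 * z.2 * (1 - z.1 - z.2) := mul_pos (mul_pos a b) (by linarith)
    linarith

theorem bottom_mem {t : ℝ} (h0 : 0 ≤ t) (h1 : t ≤ 1) : ((t, 0) : ℝ × ℝ) ∈ frontier Tref :=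
  mem_frontier_Tref.2 ⟨⟨h0, le_rfl, by simpa using h1⟩, by simp⟩

theorem left_mem {t : ℝ} (h0 : 0 ≤ t) (h1 : t ≤ 1) : ((0, t) : ℝ × ℝ) ∈ frontier Tref :=
  mem_frontier_Tref.2 ⟨⟨le_rfl, h0, by simpa using h1⟩, by simp⟩

theorem diag_mem {t : ℝ} (h0 : 0 ≤ t) (h1 : t ≤ 1) : ((t, 1 - t) : ℝ × ℝ) ∈ frontier Tref :=
  mem_frontier_Tref.2 ⟨⟨h0, by simpa using h1, by simp⟩, by simp⟩

/-- The one-sided derivative determines a directional derivative, so a function vanishing on a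
segment has vanishing derivative along it at its starting point. -/
theorem fderiv_eq_zero_of_segment {f : ℝ × ℝ → ℝ} {p d : ℝ × ℝ} (hf : DifferentiableAt ℝ f p)
    (h : ∀ t ∈ Set.Icc (0 : ℝ) 1, f (p + t • d) = 0) : fderiv ℝ f p d = 0 := by
  have hline : HasDerivAt (fun t : ℝ => p + t • d) d 0 := by
    simpa using ((hasDerivAt_id (0 : ℝ)).smul_const d).const_add p
  have h1 : HasDerivAt (fun t : ℝ => f (p + t • d)) (fderiv ℝ f p d) 0 := by
    have hf' : HasFDerivAt f (fderiv ℝ f p) (p + (0 : ℝ) • d) := by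
      simpa using hf.hasFDerivAt
    exact hf'.comp_hasDerivAt (0 : ℝ) hline
  have h2 : HasDerivWithinAt (fun t : ℝ => f (p + t • d)) 0 (Set.Icc 0 1) 0 :=
    (hasDerivWithinAt_const (0 : ℝ) (Set.Icc (0 : ℝ) 1) (0 : ℝ)).congr h (h 0 (by simp))
  exact (uniqueDiffOn_Icc_zero_one 0 (by simp)).eq_deriv _ h1.hasDerivWithinAt h2

theorem eq_of_fderiv_segment {f : ℝ × ℝ → ℝ} {p d : ℝ × ℝ} (hf : Differentiable ℝ f)
    (h : ∀ t ∈ Set.Icc (0 : ℝ) 1, fderiv ℝ f (p + t • d) = 0) :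
    ∀ t ∈ Set.Icc (0 : ℝ) 1, f (p + t • d) = f p := by
  have h1 : ∀ t : ℝ, HasDerivAt (fun t : ℝ => f (p + t • d)) (fderiv ℝ f (p + t • d) d) t := by
    intro t
    have hline : HasDerivAt (fun t : ℝ => p + t • d) d t := by
      simpa using ((hasDerivAt_id t).smul_const d).const_add p
    exact (hf (p + t • d)).hasFDerivAt.comp_hasDerivAt t hline
  intro t ht
  have := constant_of_has_deriv_right_zero
    (fun s _ => (h1 s).continuousAt.continuousWithinAt)
    (fun s hs => by
      have := (h1 s).hasDerivWithinAt (s := Set.Ici s)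
      rwa [h s ⟨hs.1, hs.2.le⟩] at this) t ht
  simpa using this

/-- The boundary is connected, so a function whose gradient vanishes there and which is zero at the
origin is zero on all of it. -/
theorem eq_zero_on_frontier {f : ℝ × ℝ → ℝ} (hf : Differentiable ℝ f) (h0 : f (0, 0) = 0)
    (h : ∀ z ∈ frontier Tref, fderiv ℝ f z = 0) : ∀ z ∈ frontier Tref, f z = 0 := by
  have hb : ∀ t ∈ Set.Icc (0 : ℝ) 1, f (t, 0) = 0 := fun t ht => by
    have := eq_of_fderiv_segment (p := (0, 0)) (d := (1, 0)) hf
      (fun s hs => h _ (by simpa using bottom_mem hs.1 hs.2)) t ht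
    simpa [h0] using this
  have hl : ∀ t ∈ Set.Icc (0 : ℝ) 1, f (0, t) = 0 := fun t ht => by
    have := eq_of_fderiv_segment (p := (0, 0)) (d := (0, 1)) hf
      (fun s hs => h _ (by simpa using left_mem hs.1 hs.2)) t ht
    simpa [h0] using this
  have hd : ∀ t ∈ Set.Icc (0 : ℝ) 1, f (t, 1 - t) = 0 := fun t ht => by
    have := eq_of_fderiv_segment (p := (0, 1)) (d := (1, -1)) hf
      (fun s hs => h _ (by simpa [sub_eq_add_neg] using diag_mem hs.1 hs.2)) t ht
    simpa [hl 1 (by simp), sub_eq_add_neg] using this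
  rintro ⟨x, y⟩ hz
  obtain ⟨⟨h1, h2, h3⟩, h4⟩ := mem_frontier_Tref.1 hz
  simp only [mul_eq_zero] at h1 h2 h3 h4
  rcases h4 with (rfl | rfl) | h4
  · exact hl y ⟨h2, by linarith⟩
  · exact hb x ⟨h1, by linarith⟩
  · obtain rfl : y = 1 - x := by linarith
    exact hd x ⟨h1, by linarith⟩

theorem setIntegral_Tref {f : ℝ × ℝ → ℝ} (hf : Continuous f) :
    ∫ z in Tref, f z = ∫ x in (0 : ℝ)..1, ∫ y in (0 : ℝ)..(1 - x), f (x, y) := by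
  have hm : MeasurableSet Tref := isClosed_Tref.measurableSet
  have hi : Integrable (Tref.indicator f) (volume.prod volume) := by
    rw [← Measure.volume_eq_prod, integrable_indicator_iff hm]
    exact hf.continuousOn.integrableOn_compact isCompact_Tref
  rw [← integral_indicator hm, Measure.volume_eq_prod, integral_prod _ hi,
    intervalIntegral.integral_of_le zero_le_one, ← integral_Icc_eq_integral_Ioc,
    ← integral_indicator measurableSet_Icc]
  congr 1
  funext x
  by_cases hx : x ∈ Set.Icc (0 : ℝ) 1
  · rw [Set.indicator_of_mem hx, intervalIntegral.integral_of_le (by linarith [hx.2]),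
      ← integral_Icc_eq_integral_Ioc, ← integral_indicator measurableSet_Icc]
    congr 1
    funext y
    simp only [Set.indicator, Tref, Set.mem_ofPred_eq, Set.mem_Icc, hx.1, true_and]
    congr 1
    rw [le_sub_iff_add_le']
  · rw [Set.indicator_of_notMem hx]
    have : ∀ y, Tref.indicator f (x, y) = 0 := fun y =>
      Set.indicator_of_notMem (fun h : (x, y) ∈ Tref => hx ⟨h.1, by
        have := h.2.1; have := h.2.2; simp only at *; linarith⟩) _
    simp [this]

theorem setIntegral_Tref_swap (f : ℝ × ℝ → ℝ) :
    ∫ z in Tref, f z.swap = ∫ z in Tref, f z := by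
  have h := (Measure.measurePreserving_swap (μ := (volume : Measure ℝ))
    (ν := (volume : Measure ℝ))).setIntegral_preimage_emb
      MeasurableEquiv.prodComm.measurableEmbedding f Tref
  rw [← Measure.volume_eq_prod] at h
  rw [← h]
  congr 2
  ext z
  simp [Tref, and_left_comm, add_comm]

/-- A derivative in the second variable integrates to zero over the triangle if the primitive
vanishes on the boundary. -/
theorem setIntegral_Tref_snd {f f' : ℝ × ℝ → ℝ} (hc : Continuous f')
    (hd : ∀ x y, HasDerivAt (fun t => f (x, t)) (f' (x, y)) y)
    (h : ∀ z ∈ frontier Tref, f z = 0) : ∫ z in Tref, f' z = 0 := by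
  rw [setIntegral_Tref hc]
  have : ∀ x ∈ Set.uIcc (0 : ℝ) 1, ∫ y in (0 : ℝ)..(1 - x), f' (x, y) = 0 := by
    intro x hx
    rw [Set.uIcc_of_le zero_le_one] at hx
    rw [intervalIntegral.integral_eq_sub_of_hasDerivAt (f := fun t => f (x, t))
      (fun y _ => hd x y) ((hc.comp (by fun_prop)).intervalIntegrable _ _)]
    simp [h _ (diag_mem hx.1 hx.2), h _ (bottom_mem hx.1 hx.2)]
  rw [intervalIntegral.integral_congr this]
  simp

open MvPolynomial in
theorem integral_pderiv_one {P : MvPolynomial (Fin 2) ℝ} (h : ∀ z ∈ frontier Tref, ev P z = 0) :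
    ∫ z in Tref, ev (pderiv 1 P) z = 0 := by
  refine setIntegral_Tref_snd (f := ev P) (continuous_ev _) (fun x y => ?_) h
  have := (hasFDerivAt_ev P (x, y)).comp_hasDerivAt y
    ((hasDerivAt_const y x).prodMk (hasDerivAt_id y))
  exact this.congr_deriv (by simp)

open MvPolynomial in
theorem integral_pderiv_zero {P : MvPolynomial (Fin 2) ℝ} (h : ∀ z ∈ frontier Tref, ev P z = 0) :
    ∫ z in Tref, ev (pderiv 0 P) z = 0 := by
  rw [← setIntegral_Tref_swap]
  refine setIntegral_Tref_snd (f := fun z => ev P z.swap)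
    ((continuous_ev _).comp continuous_swap) (fun x y => ?_) fun z hz => h _ ?_
  · have := (hasFDerivAt_ev P (y, x)).comp_hasDerivAt y
      ((hasDerivAt_id y).prodMk (hasDerivAt_const y x))
    exact this.congr_deriv (by simp)
  · rw [mem_frontier_Tref] at hz ⊢
    obtain ⟨⟨h1, h2, h3⟩, h4⟩ := hz
    refine ⟨⟨h2, h1, by simpa [add_comm] using h3⟩, ?_⟩
    simp only [Prod.fst_swap, Prod.snd_swap]
    linear_combination h4

/-! ### The range of the divergence on boundary-vanishing fields -/

section Divergence

open MvPolynomial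

/-- The cubic bubble function `xy(1 - x - y)`. -/
def bubble : MvPolynomial (Fin 2) ℝ := X 0 * X 1 * (1 - X 0 - X 1)

/-- The map `w ↦ ∂ᵢ(b w)`, `b` the bubble: the divergence of the field with `i`-th component `b w`
and other component zero. -/
def divBubble (i : Fin 2) : MvPolynomial (Fin 2) ℝ →ₗ[ℝ] MvPolynomial (Fin 2) ℝ :=
  (pderiv i).toLinearMap ∘ₗ LinearMap.mulLeft ℝ bubble

theorem divBubble_apply (i : Fin 2) (w : MvPolynomial (Fin 2) ℝ) :
    divBubble i w = pderiv i (bubble * w) := rfl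

theorem ev_bubble_mul (w : MvPolynomial (Fin 2) ℝ) {z : ℝ × ℝ} (hz : z ∈ frontier Tref) :
    ev (bubble * w) z = 0 := by
  have := (mem_frontier_Tref.1 hz).2
  simp [ev, bubble]
  left
  simpa using this

theorem bubble_mul_mem {m : ℕ} {w : MvPolynomial (Fin 2) ℝ}
    (hw : w ∈ restrictTotalDegree (Fin 2) ℝ m) :
    bubble * w ∈ restrictTotalDegree (Fin 2) ℝ (m + 3) := by
  have hb : bubble ∈ restrictTotalDegree (Fin 2) ℝ 3 := by
    have h : bubble = X 0 ^ 1 * X 1 ^ 1 - X 0 ^ 2 * X 1 ^ 1 - X 0 ^ 1 * X 1 ^ 2 := by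
      simp only [bubble]; ring
    rw [h]
    exact Submodule.sub_mem _ (Submodule.sub_mem _ (X_pow_mem (by norm_num))
      (X_pow_mem (by norm_num))) (X_pow_mem (by norm_num))
  rw [mem_restrictTotalDegree] at *
  exact (totalDegree_mul _ _).trans (by omega)

/-- A polynomial vanishing on the boundary has vanishing gradient at the vertices. -/
theorem pderiv_vertex {P : MvPolynomial (Fin 2) ℝ} (h : ∀ z ∈ frontier Tref, ev P z = 0)
    (i : Fin 2) : ev (pderiv i P) (0, 0) = 0 ∧ ev (pderiv i P) (1, 0) = 0 ∧
      ev (pderiv i P) (0, 1) = 0 := by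
  -- Each vertex is the common endpoint of two edges, whose directions span the plane.
  have key : ∀ p d : ℝ × ℝ, (∀ t ∈ Set.Icc (0 : ℝ) 1, p + t • d ∈ frontier Tref) →
      ev (pderiv 0 P) p * d.1 + ev (pderiv 1 P) p * d.2 = 0 := fun p d hpd => by
    rw [← fderiv_ev]
    exact fderiv_eq_zero_of_segment (differentiable_ev P p) fun t ht => h _ (hpd t ht)
  have a1 := key (0, 0) (1, 0) fun t ht => by simpa using bottom_mem ht.1 ht.2
  have a2 := key (0, 0) (0, 1) fun t ht => by simpa using left_mem ht.1 ht.2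
  have b1 := key (1, 0) (-1, 0) fun t ht => by
    simpa [sub_eq_add_neg] using bottom_mem (t := 1 - t) (by linarith [ht.2]) (by linarith [ht.1])
  have b2 := key (1, 0) (-1, 1) fun t ht => by
    simpa [sub_eq_add_neg] using diag_mem (t := 1 - t) (by linarith [ht.2]) (by linarith [ht.1])
  have c1 := key (0, 1) (0, -1) fun t ht => by
    simpa [sub_eq_add_neg] using left_mem (t := 1 - t) (by linarith [ht.2]) (by linarith [ht.1])
  have c2 := key (0, 1) (1, -1) fun t ht => by
    simpa [sub_eq_add_neg] using diag_mem (t := t) ht.1 ht.2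
  simp only at a1 a2 b1 b2 c1 c2
  fin_cases i
  · exact ⟨by simp only [Fin.zero_eta]; linarith, by simp only [Fin.zero_eta]; linarith,
      by simp only [Fin.zero_eta]; linarith⟩
  · exact ⟨by simp only [Fin.mk_one]; linarith, by simp only [Fin.mk_one]; linarith,
      by simp only [Fin.mk_one]; linarith⟩

/-- Polynomials with vanishing mean over the triangle and vanishing value at its vertices. -/
def meanVertexZero : Submodule ℝ (MvPolynomial (Fin 2) ℝ) where
  carrier := {P | (∫ z in Tref, ev P z) = 0 ∧ ev P (0, 0) = 0 ∧ ev P (1, 0) = 0 ∧ ev P (0, 1) = 0}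
  zero_mem' := by simp [ev]
  add_mem' := by
    rintro P Q ⟨p1, p2, p3, p4⟩ ⟨q1, q2, q3, q4⟩
    have hadd : ∀ z, ev (P + Q) z = ev P z + ev Q z := fun z => by simp [ev]
    refine ⟨?_, by simp [hadd, p2, q2], by simp [hadd, p3, q3], by simp [hadd, p4, q4]⟩
    simp_rw [hadd]
    rw [integral_add ((continuous_ev P).continuousOn.integrableOn_compact isCompact_Tref)
      ((continuous_ev Q).continuousOn.integrableOn_compact isCompact_Tref), p1, q1, add_zero]
  smul_mem' := by
    rintro c P ⟨p1, p2, p3, p4⟩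
    have hsmul : ∀ z, ev (c • P) z = c * ev P z := fun z => by simp [ev]
    refine ⟨?_, by simp [hsmul, p2], by simp [hsmul, p3], by simp [hsmul, p4]⟩
    simp_rw [hsmul]
    rw [integral_const_mul, p1, mul_zero]

theorem pderiv_mem_meanVertexZero {P : MvPolynomial (Fin 2) ℝ}
    (h : ∀ z ∈ frontier Tref, ev P z = 0) (i : Fin 2) : pderiv i P ∈ meanVertexZero := by
  refine ⟨?_, pderiv_vertex h i⟩
  fin_cases i
  · exact integral_pderiv_zero h
  · exact integral_pderiv_one h

theorem divBubble_mem (i : Fin 2) (w : MvPolynomial (Fin 2) ℝ) : divBubble i w ∈ meanVertexZero :=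
  pderiv_mem_meanVertexZero (fun _ hz => ev_bubble_mul w hz) i

theorem divBubble_zero_monomial (a b : ℕ) :
    divBubble 0 (X 0 ^ a * X 1 ^ b) = (a + 1 : ℝ) • (X 0 ^ a * X 1 ^ (b + 1))
      - (a + 2 : ℝ) • (X 0 ^ (a + 1) * X 1 ^ (b + 1)) - (a + 1 : ℝ) • (X 0 ^ a * X 1 ^ (b + 2)) := by
  have h : bubble * (X 0 ^ a * X 1 ^ b) = X 0 ^ (a + 1) * X 1 ^ (b + 1)
      - X 0 ^ (a + 2) * X 1 ^ (b + 1) - X 0 ^ (a + 1) * X 1 ^ (b + 2) := by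
    simp only [bubble]; ring
  rw [divBubble_apply, h]
  have h2 : (C 2 : MvPolynomial (Fin 2) ℝ) = 2 := map_ofNat C 2
  simp [pderiv_X, smul_eq_C_mul, h2]
  ring

theorem divBubble_one_monomial (a b : ℕ) :
    divBubble 1 (X 0 ^ a * X 1 ^ b) = (b + 1 : ℝ) • (X 0 ^ (a + 1) * X 1 ^ b)
      - (b + 2 : ℝ) • (X 0 ^ (a + 1) * X 1 ^ (b + 1)) - (b + 1 : ℝ) • (X 0 ^ (a + 2) * X 1 ^ b) := by
  have h : bubble * (X 0 ^ a * X 1 ^ b) = X 0 ^ (a + 1) * X 1 ^ (b + 1)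
      - X 0 ^ (a + 2) * X 1 ^ (b + 1) - X 0 ^ (a + 1) * X 1 ^ (b + 2) := by
    simp only [bubble]; ring
  rw [divBubble_apply, h]
  have h2 : (C 2 : MvPolynomial (Fin 2) ℝ) = 2 := map_ofNat C 2
  simp [pderiv_X, smul_eq_C_mul, h2]
  ring

/-- Divergences of the fields `b (w₁, w₂)` with `w₁, w₂` of degree at most `m`. -/
def divRange (m : ℕ) : Submodule ℝ (MvPolynomial (Fin 2) ℝ) :=
  (restrictTotalDegree (Fin 2) ℝ m).map (divBubble 0) ⊔
    (restrictTotalDegree (Fin 2) ℝ m).map (divBubble 1)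

theorem mem_divRange {m : ℕ} {P : MvPolynomial (Fin 2) ℝ} :
    P ∈ divRange m ↔ ∃ u ∈ restrictTotalDegree (Fin 2) ℝ m,
      ∃ w ∈ restrictTotalDegree (Fin 2) ℝ m, divBubble 0 u + divBubble 1 w = P := by
  simp [divRange, Submodule.mem_sup]

theorem divRange_le (m : ℕ) : divRange m ≤ meanVertexZero := by
  refine sup_le ?_ ?_ <;> rintro _ ⟨w, -, rfl⟩ <;> exact divBubble_mem _ w

theorem divRange_mono {m n : ℕ} (h : m ≤ n) : divRange m ≤ divRange n := by
  have : restrictTotalDegree (Fin 2) ℝ m ≤ restrictTotalDegree (Fin 2) ℝ n := fun P hP => by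
    rw [mem_restrictTotalDegree] at *; omega
  exact sup_le_sup (Submodule.map_mono this) (Submodule.map_mono this)

/-- Every polynomial of degree `m + 3` is a divergence modulo lower degree. Modulo lower degree,
radial fields `p · (x, y)` reach all multiples of `xy(x + y)`, and `x^{m+1}`, `y^{m+1}`, `x^m y` in
one component reach the remaining three-dimensional quotient. -/
theorem restrict_succ_le (m : ℕ) :
    restrictTotalDegree (Fin 2) ℝ (m + 3) ≤
      restrictTotalDegree (Fin 2) ℝ (m + 2) ⊔ divRange (m + 1) := by
  set H := restrictTotalDegree (Fin 2) ℝ (m + 2) ⊔ divRange (m + 1)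
  have hlow : ∀ i j : ℕ, i + j ≤ m + 2 → (X 0 ^ i * X 1 ^ j : MvPolynomial (Fin 2) ℝ) ∈ H :=
    fun i j h => Submodule.mem_sup_left (X_pow_mem h)
  have hd0 : ∀ i j : ℕ, i + j ≤ m + 1 → divBubble 0 (X 0 ^ i * X 1 ^ j) ∈ H := fun i j h =>
    Submodule.mem_sup_right (Submodule.mem_sup_left ⟨_, X_pow_mem h, rfl⟩)
  have hd1 : ∀ i j : ℕ, i + j ≤ m + 1 → divBubble 1 (X 0 ^ i * X 1 ^ j) ∈ H := fun i j h =>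
    Submodule.mem_sup_right (Submodule.mem_sup_right ⟨_, X_pow_mem h, rfl⟩)
  -- The radial fields, with Euler's factor `i + j + 5`.
  have hrad : ∀ i j : ℕ, i + j = m → (X 0 ^ (i + 2) * X 1 ^ (j + 1) +
      X 0 ^ (i + 1) * X 1 ^ (j + 2) : MvPolynomial (Fin 2) ℝ) ∈ H := fun i j h => by
    have h1 := hd0 (i + 1) j (by omega)
    have h2 := hd1 i (j + 1) (by omega)
    have h3 := H.smul_mem (i + j + 4 : ℝ) (hlow (i + 1) (j + 1) (by omega))
    rw [divBubble_zero_monomial] at h1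
    rw [divBubble_one_monomial] at h2
    have hne : (i + j + 5 : ℝ) ≠ 0 := by positivity
    rw [← H.smul_mem_iff hne]
    convert H.sub_mem h3 (H.add_mem h1 h2) using 1
    push_cast
    module
  have hxy : (X 0 ^ (m + 2) * X 1 ^ 1 : MvPolynomial (Fin 2) ℝ) ∈ H := by
    have h1 := hd1 m 1 (by omega)
    have h2 := H.smul_mem (2 : ℝ) (hlow (m + 1) 1 (by omega))
    have h3 := H.smul_mem (3 : ℝ) (hrad m 0 (by omega))
    rw [divBubble_one_monomial] at h1
    convert H.add_mem (H.sub_mem h1 h2) h3 using 1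
    push_cast
    module
  have hind : ∀ j : ℕ, j ≤ m + 1 →
      (X 0 ^ (m + 2 - j) * X 1 ^ (j + 1) : MvPolynomial (Fin 2) ℝ) ∈ H := by
    intro j
    induction j with
    | zero => exact fun _ => hxy
    | succ j ih =>
      intro hj
      have h1 := ih (by omega)
      have h2 := hrad (m - j) j (by omega)
      rw [show m + 2 - j = m - j + 2 by omega] at h1
      rw [show m + 2 - (j + 1) = m - j + 1 by omega]
      simpa using H.sub_mem h2 h1
  refine restrictTotalDegree_le fun i j hij => ?_
  rcases Nat.lt_or_ge (i + j) (m + 3) with hlt | hge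
  · exact hlow i j (by omega)
  rcases j with _ | j
  · have h1 := hd1 (m + 1) 0 (by omega)
    have h2 := hlow (m + 2) 0 (by omega)
    have h3 := H.smul_mem (2 : ℝ) hxy
    rw [divBubble_one_monomial] at h1
    obtain rfl : i = m + 3 := by omega
    convert H.sub_mem (H.sub_mem h2 h1) h3 using 1
    push_cast
    module
  rcases i with _ | i
  · have h1 := hd0 0 (m + 1) (by omega)
    have h2 := hlow 0 (m + 2) (by omega)
    have h3 := H.smul_mem (2 : ℝ) (hind (m + 1) (by omega))
    rw [show m + 2 - (m + 1) = 1 by omega] at h3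
    rw [divBubble_zero_monomial] at h1
    obtain rfl : j = m + 2 := by omega
    convert H.sub_mem (H.sub_mem h2 h1) h3 using 1
    push_cast
    module
  · have := hind j (by omega)
    rwa [show m + 2 - j = i + 1 by omega] at this

theorem integral_xy_pos : 0 < ∫ z in Tref, z.1 * z.2 := by
  rw [setIntegral_Tref (f := fun z => z.1 * z.2) (by fun_prop)]
  have : ∀ x : ℝ, ∫ y in (0 : ℝ)..(1 - x), x * y = x / 2 - x ^ 2 + x ^ 3 / 2 := fun x => by
    rw [intervalIntegral.integral_const_mul, integral_id]; ring
  simp_rw [this]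
  rw [intervalIntegral.integral_add (Continuous.intervalIntegrable (by fun_prop) _ _)
      (Continuous.intervalIntegrable (by fun_prop) _ _),
    intervalIntegral.integral_sub (Continuous.intervalIntegrable (by fun_prop) _ _)
      (Continuous.intervalIntegrable (by fun_prop) _ _)]
  simp only [intervalIntegral.integral_div, integral_pow, integral_id]
  norm_num

/-- The lowest-degree case: modulo the two divergences `∂ₓb`, `∂ᵧb`, quadratics reduce to
`α + βx + γy + δxy`; the vertex values kill `α, β, γ` and the mean value kills `δ`. -/
theorem meanVertexZero_two {P : MvPolynomial (Fin 2) ℝ}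
    (hP : P ∈ restrictTotalDegree (Fin 2) ℝ 2) (hC : P ∈ meanVertexZero) : P ∈ divRange 0 := by
  set L : Submodule ℝ (MvPolynomial (Fin 2) ℝ) := Submodule.span ℝ {1, X 0, X 1, X 0 * X 1}
  have hd0 : X 1 - (2 : ℝ) • (X 0 * X 1) - X 1 ^ 2 ∈ L ⊔ divRange 0 := by
    refine Submodule.mem_sup_right (Submodule.mem_sup_left ⟨_,
      X_pow_mem (i := 0) (j := 0) le_rfl, ?_⟩)
    rw [divBubble_zero_monomial]; simp
  have hd1 : X 0 - (2 : ℝ) • (X 0 * X 1) - X 0 ^ 2 ∈ L ⊔ divRange 0 := by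
    refine Submodule.mem_sup_right (Submodule.mem_sup_right ⟨_,
      X_pow_mem (i := 0) (j := 0) le_rfl, ?_⟩)
    rw [divBubble_one_monomial]; simp
  have hL : ∀ Q ∈ ({1, X 0, X 1, X 0 * X 1} : Set (MvPolynomial (Fin 2) ℝ)), Q ∈ L ⊔ divRange 0 :=
    fun Q hQ => Submodule.mem_sup_left (Submodule.subset_span hQ)
  have h1 := hL 1 (by simp)
  have hx := hL (X 0) (by simp)
  have hy := hL (X 1) (by simp)
  have hxy := hL (X 0 * X 1) (by simp)
  have hle : restrictTotalDegree (Fin 2) ℝ 2 ≤ L ⊔ divRange 0 := by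
    refine restrictTotalDegree_le fun i j hij => ?_
    have hi : i ≤ 2 := by omega
    have hj : j ≤ 2 := by omega
    interval_cases i <;> interval_cases j <;> try omega
    · simpa using h1
    · simpa using hy
    · convert Submodule.sub_mem _ (Submodule.sub_mem _ hy (Submodule.smul_mem _ (2 : ℝ) hxy)) hd0
        using 1
      simp
    · simpa using hx
    · simpa using hxy
    · convert Submodule.sub_mem _ (Submodule.sub_mem _ hx (Submodule.smul_mem _ (2 : ℝ) hxy)) hd1
        using 1
      simp
  obtain ⟨l, hl, r, hr, rfl⟩ := Submodule.mem_sup.1 (hle hP)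
  have hlC : l ∈ meanVertexZero := by simpa using Submodule.sub_mem _ hC (divRange_le 0 hr)
  suffices l = 0 by rwa [this, zero_add]
  simp only [L, Submodule.mem_span_insert, Submodule.mem_span_singleton] at hl
  obtain ⟨α, _, ⟨β, _, ⟨γ, _, ⟨δ, rfl⟩, rfl⟩, rfl⟩, rfl⟩ := hl
  obtain ⟨hmean, e0, e1, e2⟩ := hlC
  simp [ev] at e0 e1 e2
  subst e0
  simp only [zero_add] at e1 e2
  subst e1 e2
  simp [ev] at hmean
  rw [integral_const_mul] at hmean
  have : δ = 0 := (mul_eq_zero.1 hmean).resolve_right integral_xy_pos.ne'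
  simp [this]

theorem mem_divRange_of_meanVertexZero (m : ℕ) : ∀ {P : MvPolynomial (Fin 2) ℝ},
    P ∈ restrictTotalDegree (Fin 2) ℝ (m + 2) → P ∈ meanVertexZero → P ∈ divRange m := by
  induction m with
  | zero => exact meanVertexZero_two
  | succ m ih =>
    intro P hP hC
    obtain ⟨r, hr, d, hd, rfl⟩ := Submodule.mem_sup.1 (restrict_succ_le m hP)
    have hrC : r ∈ meanVertexZero := by
      simpa using Submodule.sub_mem _ hC (divRange_le (m + 1) hd)
    exact Submodule.add_mem _ (divRange_mono (Nat.le_succ m) (ih hr hrC)) hd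

end Divergence

/-! ### Exactness of the interior sequence -/

/-- Exactness of `0 → Σ_I(T̂) → V_I(T̂) → Q_I(T̂) → 0` for `k ≥ 4`:
(i) `curl` maps `Σ_I(T̂)` into `V_I(T̂)` and is injective on `Σ_I(T̂)`,
(ii) the kernel of `div` restricted to `V_I(T̂)` equals `curl Σ_I(T̂)`,
(iii) `div` maps `V_I(T̂)` onto `Q_I(T̂)`. -/
theorem interior_sequence_exact (k : ℕ) (hk : 4 ≤ k) :
    (∀ φ ∈ SigmaI k, pcurl φ ∈ VI k) ∧
    Set.InjOn pcurl (SigmaI k) ∧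
    {v | v ∈ VI k ∧ pdiv v = 0} = pcurl '' SigmaI k ∧
    pdiv '' VI k = QI k := by
  have hmaps : ∀ φ ∈ SigmaI k, pcurl φ ∈ VI k := by
    rintro φ ⟨hφ, h⟩
    obtain ⟨P, hP, rfl⟩ := mem_polyFun.1 hφ
    rw [← MvPolynomial.mem_restrictTotalDegree] at hP
    have h0 := (MvPolynomial.mem_restrictTotalDegree _ _ _).1 (pderiv_mem 0 hP)
    have h1 := (MvPolynomial.mem_restrictTotalDegree _ _ _).1 (pderiv_mem 1 hP)
    refine ⟨mem_polyFun.2 ⟨_, h1, by rw [pcurl_ev]⟩,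
      mem_polyFun.2 ⟨_, (MvPolynomial.totalDegree_neg _).trans_le h0, by rw [pcurl_ev]⟩,
      fun z hz => ?_⟩
    simp [pcurl, (h z hz).2]
  have hVI : ∀ v ∈ VI k, ∃ P Q : MvPolynomial (Fin 2) ℝ,
      P ∈ MvPolynomial.restrictTotalDegree (Fin 2) ℝ k ∧
      Q ∈ MvPolynomial.restrictTotalDegree (Fin 2) ℝ k ∧ v = fun z => (ev P z, ev Q z) := by
    rintro v ⟨h1, h2, -⟩
    obtain ⟨P, hP, h1⟩ := mem_polyFun.1 h1
    obtain ⟨Q, hQ, h2⟩ := mem_polyFun.1 h2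
    rw [← MvPolynomial.mem_restrictTotalDegree] at hP hQ
    exact ⟨P, Q, hP, hQ, funext fun z => Prod.ext (congrFun h1 z) (congrFun h2 z)⟩
  have hO : ((0, 0) : ℝ × ℝ) ∈ frontier Tref := bottom_mem le_rfl zero_le_one
  refine ⟨hmaps, ?_, ?_, ?_⟩
  · rintro φ ⟨hφ, hφ0⟩ ψ ⟨hψ, hψ0⟩ heq
    obtain ⟨P, -, rfl⟩ := mem_polyFun.1 hφ
    obtain ⟨Q, -, rfl⟩ := mem_polyFun.1 hψ
    refine eq_of_fderiv_eq (differentiable_ev P) (differentiable_ev Q) (fun z => ?_) (0, 0)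
      ((hφ0 _ hO).1.trans (hψ0 _ hO).1.symm)
    have := congrFun heq z
    simp only [pcurl, Prod.mk.injEq, neg_inj] at this
    ext <;> simp [this.1, this.2]
  · refine Set.Subset.antisymm ?_ ?_
    · rintro v ⟨hv, hdiv⟩
      obtain ⟨P, Q, hP, hQ, rfl⟩ := hVI v hv
      have hPQ : MvPolynomial.pderiv 0 P + MvPolynomial.pderiv 1 Q = 0 := by
        apply ev_injective
        rw [← pdiv_ev, hdiv]
        funext z; simp [ev]
      obtain ⟨R, hR, rfl, rfl, hR0⟩ := exists_potential hP hQ hPQ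
      have hgrad : ∀ z ∈ frontier Tref, fderiv ℝ (ev R) z = 0 := fun z hz => by
        have := hv.2.2 z hz
        rw [← pcurl_ev] at this
        simp only [pcurl, Prod.mk_eq_zero, neg_eq_zero] at this
        ext <;> simp [this.1, this.2]
      refine ⟨ev R, ⟨mem_polyFun.2 ⟨R, (MvPolynomial.mem_restrictTotalDegree _ _ _).1 hR, rfl⟩,
        fun z hz => ⟨eq_zero_on_frontier (differentiable_ev R) hR0 hgrad z hz, hgrad z hz⟩⟩,
        pcurl_ev R⟩
    · rintro _ ⟨φ, hφ, rfl⟩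
      refine ⟨hmaps φ hφ, ?_⟩
      obtain ⟨P, -, rfl⟩ := mem_polyFun.1 hφ.1
      rw [pcurl_ev, pdiv_ev, map_neg, pderiv_comm]
      funext z; simp [ev]
  · refine Set.Subset.antisymm ?_ ?_
    · rintro _ ⟨v, hv, rfl⟩
      obtain ⟨P, Q, hP, hQ, rfl⟩ := hVI v hv
      have h1 : ∀ z ∈ frontier Tref, ev P z = 0 := fun z hz => congrArg Prod.fst (hv.2.2 z hz)
      have h2 : ∀ z ∈ frontier Tref, ev Q z = 0 := fun z hz => congrArg Prod.snd (hv.2.2 z hz)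
      rw [pdiv_ev]
      refine ⟨mem_polyFun.2 ⟨_, ?_, rfl⟩, meanVertexZero.add_mem
        (pderiv_mem_meanVertexZero h1 0) (pderiv_mem_meanVertexZero h2 1)⟩
      rw [← MvPolynomial.mem_restrictTotalDegree]
      exact Submodule.add_mem _ (pderiv_mem 0 hP) (pderiv_mem 1 hQ)
    · rintro q ⟨hq, hC⟩
      obtain ⟨P, hP, rfl⟩ := mem_polyFun.1 hq
      obtain ⟨m, rfl⟩ : ∃ m, k = m + 3 := ⟨k - 3, by omega⟩
      rw [← MvPolynomial.mem_restrictTotalDegree] at hP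
      obtain ⟨u, hu, w, hw, rfl⟩ := mem_divRange.1 (mem_divRange_of_meanVertexZero m hP hC)
      refine ⟨fun z => (ev (bubble * u) z, ev (bubble * w) z), ⟨?_, ?_, fun z hz => ?_⟩, pdiv_ev _ _⟩
      · exact mem_polyFun.2 ⟨_,
          (MvPolynomial.mem_restrictTotalDegree _ _ _).1 (bubble_mul_mem hu), rfl⟩
      · exact mem_polyFun.2 ⟨_,
          (MvPolynomial.mem_restrictTotalDegree _ _ _).1 (bubble_mul_mem hw), rfl⟩
      · simp [ev_bubble_mul _ hz]
end
end

section
/- For every integer k ≥ 3, the real vector space Σ_I(T̂) = {φ ∈ P_{k+1} : φ(z) = 0 and ∇φ(z) = 0 for every z ∈ ∂T̂} has dimension (k² − 7k + 12)/2 = (k−3)(k−4)/2. -/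
/-!
The elements of `Σ_I(T̂)` are exactly the polynomial functions `(x y (1 - x - y))² ψ` with
`ψ ∈ P_{k-5}` (no nonzero `ψ` when `k ≤ 4`), so the dimension is the number of monomials of degree
at most `k - 5` in two variables.

The product rule shows that such products lie in `Σ_I(T̂)` (`bub2_mul_mem_SigmaI`). Conversely, a
polynomial vanishing on an edge restricts to a one-variable polynomial with infinitely many zeros,
so the linear form `l` of the edge divides it (`dvd_of_vanish`). On the edge the gradient of `l Q`
is `Q ∇l`, so if it vanishes too then `l` divides `Q`, and `l²` divides the polynomial
(`sq_dvd_of_vanish`). The three linear forms are pairwise coprime in a unique factorization domain,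
hence the product of their squares divides every element of `Σ_I(T̂)` (`bub2_dvd`). Total degree is
additive on products, so the cofactor has degree six less (`totalDegree_bub2_mul`).
-/

open MeasureTheory Matrix

noncomputable section

open MvPolynomial

/-! ### Counting monomials -/

/-- The set of exponents `s` with `s 0 + s 1 < m` has the cardinality `m (m + 1) / 2` of a
triangular array. -/
lemma card_exponents (m : ℕ) :
    Nat.card {s : Fin 2 →₀ ℕ | s 0 + s 1 < m} = m * (m + 1) / 2 := by
  -- group the exponents by total degree: `n < m` and `s 0 ≤ n` determine `s`
  let e : {s : Fin 2 →₀ ℕ | s 0 + s 1 < m} ≃ (Σ n : Fin m, Fin (n + 1)) :=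
    { toFun := fun s => ⟨⟨s.1 0 + s.1 1, s.2⟩, ⟨s.1 0, by simp⟩⟩
      invFun := fun p => ⟨Finsupp.equivFunOnFinite.symm ![p.2, p.1 - p.2], by
        have h1 := p.1.2
        have h2 := p.2.2
        simp only [Set.mem_ofPred_eq, Finsupp.equivFunOnFinite_symm_apply_apply,
          Matrix.cons_val_zero, Matrix.cons_val_one]
        omega⟩
      left_inv := by
        rintro ⟨s, hs⟩
        ext i
        fin_cases i <;> simp
      right_inv := by
        rintro ⟨⟨n, hn⟩, ⟨i, hi⟩⟩
        simp only at hi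
        have h : i + (n - i) = n := by omega
        simp [h]
        congr! 1
        simp [h] }
  rw [Nat.card_congr e, Nat.card_eq_fintype_card, Fintype.card_sigma]
  simp only [Fintype.card_fin]
  rw [Fin.sum_univ_eq_sum_range (fun n => n + 1) m]
  have h := Finset.sum_range_id (m + 1)
  rw [Finset.sum_range_succ'] at h
  simp only [add_zero, add_tsub_cancel_right] at h
  rw [h, mul_comm]

/-- The polynomials whose exponents satisfy `s 0 + s 1 < k - 4`. For `k ≥ 5` this is `P_{k-5}`;
for `k ≤ 4` it is zero, which keeps the truncated subtraction harmless. -/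
def cofactors (k : ℕ) : Submodule ℝ (MvPolynomial (Fin 2) ℝ) :=
  restrictSupport ℝ {s | s 0 + s 1 < k - 4}

lemma finrank_cofactors (k : ℕ) (hk : 3 ≤ k) :
    Module.finrank ℝ (cofactors k) = (k - 3) * (k - 4) / 2 := by
  rw [cofactors, Module.finrank_eq_nat_card_basis (basisRestrictSupport ℝ _), card_exponents]
  obtain rfl | h := hk.eq_or_lt
  · rfl
  · rw [show k - 3 = k - 4 + 1 by omega, mul_comm]

/-! ### The squared bubble and its degree -/

/-- The affine form `1 - x - y`, whose zero set is the hypotenuse. -/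
def hyp : MvPolynomial (Fin 2) ℝ := 1 - X 0 - X 1

/-- The square of the cubic bubble `x y (1 - x - y)`. -/
def bub2 : MvPolynomial (Fin 2) ℝ := X 0 ^ 2 * X 1 ^ 2 * hyp ^ 2

lemma totalDegree_hyp : hyp.totalDegree = 1 := by
  apply le_antisymm
  · refine (totalDegree_sub _ _).trans (max_le ((totalDegree_sub _ _).trans ?_) ?_) <;> simp
  · have h : Finsupp.single (0 : Fin 2) 1 ∈ hyp.support := by
      have h0 : ¬ (0 : Fin 2 →₀ ℕ) = Finsupp.single 0 1 := fun h => by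
        simpa using DFunLike.congr_fun h 0
      have h1 : ¬ (Finsupp.single 1 1 : Fin 2 →₀ ℕ) = Finsupp.single 0 1 := fun h => by
        simpa using DFunLike.congr_fun h 0
      rw [mem_support_iff, hyp, coeff_sub, coeff_sub, coeff_one, coeff_X, coeff_X,
        if_neg h0, if_pos rfl, if_neg h1]
      norm_num
    simpa using le_totalDegree h

lemma hyp_ne_zero : hyp ≠ 0 := fun h => by simpa [h] using totalDegree_hyp

lemma bub2_ne_zero : bub2 ≠ 0 :=
  mul_ne_zero (mul_ne_zero (pow_ne_zero _ (X_ne_zero _)) (pow_ne_zero _ (X_ne_zero _)))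
    (pow_ne_zero _ hyp_ne_zero)

lemma totalDegree_bub2_mul {Q : MvPolynomial (Fin 2) ℝ} (hQ : Q ≠ 0) :
    (bub2 * Q).totalDegree = 6 + Q.totalDegree := by
  have hX : ∀ i : Fin 2, (X i : MvPolynomial (Fin 2) ℝ) ≠ 0 := fun i => X_ne_zero i
  have hh := hyp_ne_zero
  rw [totalDegree_mul_of_isDomain bub2_ne_zero hQ, bub2]
  simp only [pow_two]
  rw [totalDegree_mul_of_isDomain, totalDegree_mul_of_isDomain, totalDegree_mul_of_isDomain,
    totalDegree_mul_of_isDomain, totalDegree_mul_of_isDomain, totalDegree_hyp,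
    totalDegree_X, totalDegree_X] <;> simp [hX, hh]

lemma sum_exponent (s : Fin 2 →₀ ℕ) : (s.sum fun _ e => e) = s 0 + s 1 := by
  rw [Finsupp.sum_fintype _ _ (fun _ => rfl), Fin.sum_univ_two]

/-- The cofactors are exactly the `Q` for which `bub2 * Q` meets the degree bound of `Σ_I`. -/
lemma mem_cofactors_iff {k : ℕ} (Q : MvPolynomial (Fin 2) ℝ) :
    Q ∈ cofactors k ↔ (bub2 * Q).totalDegree ≤ k + 1 := by
  by_cases hQ : Q = 0
  · simp [hQ]
  rw [totalDegree_bub2_mul hQ, cofactors, mem_restrictSupport_iff]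
  constructor
  · intro h
    obtain ⟨s, hs⟩ := support_nonempty.2 hQ
    have h1 : s 0 + s 1 < k - 4 := h hs
    have h2 : Q.totalDegree ≤ k - 5 := Finset.sup_le fun t ht => by
      have : t 0 + t 1 < k - 4 := h ht
      rw [sum_exponent]
      omega
    omega
  · intro h s hs
    have := le_totalDegree hs
    rw [sum_exponent] at this
    simp only [Set.mem_ofPred_eq]
    omega

/-! ### Polynomial functions and divisibility by lines -/

/-- The polynomial function on `ℝ²` attached to a polynomial, as a linear map. -/
def toFn : MvPolynomial (Fin 2) ℝ →ₗ[ℝ] (ℝ × ℝ → ℝ) where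
  toFun P := fun z => eval ![z.1, z.2] P
  map_add' P Q := by ext; simp
  map_smul' c P := by ext; simp

lemma toFn_apply (P : MvPolynomial (Fin 2) ℝ) (z : ℝ × ℝ) : toFn P z = eval ![z.1, z.2] P := rfl

lemma toFn_mul (P Q : MvPolynomial (Fin 2) ℝ) : toFn (P * Q) = toFn P * toFn Q := by
  ext; simp [toFn_apply]

lemma toFn_injective : Function.Injective toFn := by
  intro P Q h
  refine MvPolynomial.funext fun x => ?_
  have := congrFun h (x 0, x 1)
  rw [toFn_apply, toFn_apply] at this
  convert this using 2 <;> (congr 1; ext i; fin_cases i <;> rfl)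

lemma differentiable_toFn (P : MvPolynomial (Fin 2) ℝ) : Differentiable ℝ (toFn P) := by
  induction P using MvPolynomial.induction_on with
  | C a => 
    have h : toFn (C a) = fun _ => a := by ext; simp [toFn_apply]
    rw [h]
    exact differentiable_const a
  | add p q hp hq => rw [map_add]; exact hp.add hq
  | mul_X p i hp =>
    rw [toFn_mul]
    refine hp.mul ?_
    fin_cases i
    · have h : toFn (X 0) = Prod.fst := by ext; simp [toFn_apply]
      exact h ▸ differentiable_fst
    · have h : toFn (X 1) = Prod.snd := by ext; simp [toFn_apply]
      exact h ▸ differentiable_snd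

/-- A polynomial vanishing for `0 < t < 1` on the parametrized line `t ↦ (p 0 (t), p 1 (t))` is
divisible by the equation `l` of that line. The hypothesis `hl` says that modulo `l` each
coordinate is recovered from the parameter `u`. -/
lemma dvd_of_vanish (l u : MvPolynomial (Fin 2) ℝ) (p : Fin 2 → Polynomial ℝ)
    (hl : ∀ i, l ∣ X i - Polynomial.aeval u (p i)) (P : MvPolynomial (Fin 2) ℝ)
    (hP : ∀ t ∈ Set.Ioo (0 : ℝ) 1, toFn P ((p 0).eval t, (p 1).eval t) = 0) : l ∣ P := by
  have h0 : aeval p P = 0 := by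
    refine Polynomial.eq_zero_of_infinite_isRoot _ ((Set.Ioo_infinite one_pos).mono ?_)
    intro t ht
    have h := hP t ht
    rw [toFn_apply] at h
    rw [Set.mem_ofPred_eq, Polynomial.IsRoot, ← h]
    have hcomp : (Polynomial.aeval t).comp (aeval p) =
        aeval (R := ℝ) ![(p 0).eval t, (p 1).eval t] := by
      refine MvPolynomial.algHom_ext fun i => ?_
      fin_cases i <;> simp
    simpa [Polynomial.coe_aeval_eq_eval, coe_aeval_eq_eval] using AlgHom.congr_fun hcomp P
  have h1 : Ideal.Quotient.mkₐ ℝ (Ideal.span {l}) =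
      (Ideal.Quotient.mkₐ ℝ (Ideal.span {l})).comp ((Polynomial.aeval u).comp (aeval p)) := by
    refine MvPolynomial.algHom_ext fun i => ?_
    simp only [AlgHom.comp_apply, aeval_X]
    exact (Ideal.Quotient.mk_eq_mk_iff_sub_mem _ _).2 (Ideal.mem_span_singleton.2 (hl i))
  have h2 := AlgHom.congr_fun h1 P
  simp only [AlgHom.comp_apply, h0, map_zero] at h2
  exact Ideal.mem_span_singleton.1 (Ideal.Quotient.eq_zero_iff_mem.1 h2)

/-- If moreover the gradient vanishes on the segment, the line divides twice: writing `P = l * Q`,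
the derivative of `P` at a zero `z` of `l` is `Q z` times the derivative of `l`. -/
lemma sq_dvd_of_vanish (l u : MvPolynomial (Fin 2) ℝ) (p : Fin 2 → Polynomial ℝ)
    (hl : ∀ i, l ∣ X i - Polynomial.aeval u (p i))
    (hl0 : ∀ t : ℝ, toFn l ((p 0).eval t, (p 1).eval t) = 0)
    (hl1 : ∀ z, fderiv ℝ (toFn l) z ≠ 0) (P : MvPolynomial (Fin 2) ℝ)
    (hP : ∀ t ∈ Set.Ioo (0 : ℝ) 1, toFn P ((p 0).eval t, (p 1).eval t) = 0 ∧
      fderiv ℝ (toFn P) ((p 0).eval t, (p 1).eval t) = 0) : l ^ 2 ∣ P := by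
  obtain ⟨Q, rfl⟩ := dvd_of_vanish l u p hl P fun t ht => (hP t ht).1
  rw [pow_two]
  refine mul_dvd_mul_left _ (dvd_of_vanish l u p hl Q fun t ht => ?_)
  have h := (hP t ht).2
  rw [toFn_mul, fderiv_mul (differentiable_toFn _ _) (differentiable_toFn _ _), hl0, zero_smul,
    zero_add] at h
  exact (smul_eq_zero.1 h).resolve_right (hl1 _)

/-! ### The boundary of the triangle -/

/-- A point of the triangle from which some ray leaves the triangle at once is a boundary point. -/
lemma mem_frontier_of_direction {z v : ℝ × ℝ} (hz : z ∈ Tref)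
    (hv : ∀ t : ℝ, 0 < t → z + t • v ∉ Tref) : z ∈ frontier Tref := by
  refine ⟨subset_closure hz, fun hi => ?_⟩
  have hc : Filter.Tendsto (fun t : ℝ => z + t • v) (nhdsWithin 0 (Set.Ioi 0)) (nhds z) := by
    have : Continuous fun t : ℝ => z + t • v := by fun_prop
    simpa using (this.tendsto 0).mono_left nhdsWithin_le_nhds
  obtain ⟨t, ht, ht0⟩ := ((hc.eventually (mem_interior_iff_mem_nhds.1 hi)).and
    self_mem_nhdsWithin).exists
  exact hv t ht0 ht

/-- A point of the triangle at which the bubble is nonzero satisfies the three defining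
inequalities strictly, hence is interior. -/
lemma bubble_eq_zero_of_mem_frontier {z : ℝ × ℝ} (hz : z ∈ frontier Tref) :
    z.1 * z.2 * (1 - z.1 - z.2) = 0 := by
  have hcl : IsClosed Tref := by
    refine (isClosed_le continuous_const continuous_fst).inter
      ((isClosed_le continuous_const continuous_snd).inter
        (isClosed_le (continuous_fst.add continuous_snd) continuous_const))
  rw [hcl.frontier_eq] at hz
  obtain ⟨⟨h1, h2, h3⟩, hi⟩ := hz
  by_contra hne
  refine hi (mem_interior.2 ⟨{w | 0 < w.1 ∧ 0 < w.2 ∧ w.1 + w.2 < 1},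
    fun w hw => ⟨hw.1.le, hw.2.1.le, hw.2.2.le⟩, ?_, ?_, ?_, ?_⟩)
  · exact (isOpen_lt continuous_const continuous_fst).inter
      ((isOpen_lt continuous_const continuous_snd).inter
        (isOpen_lt (continuous_fst.add continuous_snd) continuous_const))
  · exact h1.lt_of_ne fun h => hne (by rw [← h]; ring)
  · exact h2.lt_of_ne fun h => hne (by rw [← h]; ring)
  · exact h3.lt_of_ne fun h => hne (by rw [show 1 - z.1 - z.2 = 0 by linarith]; ring)

lemma bub2_mul_mem_SigmaI {k : ℕ} {Q : MvPolynomial (Fin 2) ℝ} (hQ : Q ∈ cofactors k) :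
    toFn (bub2 * Q) ∈ SigmaI k := by
  refine ⟨⟨_, (mem_cofactors_iff Q).1 hQ, fun _ => rfl⟩, fun z hz => ?_⟩
  -- with `b` the bubble, `b * (b * Q)` has a vanishing factor left over in each product-rule term
  let b : MvPolynomial (Fin 2) ℝ := X 0 * X 1 * hyp
  have hb : toFn b z = 0 := by
    simpa [b, toFn_apply, hyp] using bubble_eq_zero_of_mem_frontier hz
  rw [show bub2 * Q = b * (b * Q) by simp only [bub2, b]; ring, toFn_mul]
  have hd := differentiable_toFn
  constructor
  · rw [Pi.mul_apply, hb, zero_mul]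
  · rw [fderiv_mul (hd _ _) (hd _ _), toFn_mul b Q, Pi.mul_apply, hb]
    simp

/-! ### Factoring out the squared bubble -/

/-- A coordinate is coprime to any polynomial `q` that is nonzero somewhere on its zero line,
because a coordinate is prime. -/
lemma X_isRelPrime {i : Fin 2} {q : MvPolynomial (Fin 2) ℝ} (z : ℝ × ℝ) (hz : ![z.1, z.2] i = 0)
    (hq : toFn q z ≠ 0) : IsRelPrime (X i) q := by
  refine (X_prime (R := ℝ)).irreducible.isRelPrime_iff_not_dvd.2 ?_
  rintro ⟨r, rfl⟩
  exact hq (by rw [toFn_mul, Pi.mul_apply, toFn_apply, eval_X, hz, zero_mul])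

/-- Each edge contributes the square of its linear form, and the three forms are pairwise
coprime. -/
lemma bub2_dvd {P : MvPolynomial (Fin 2) ℝ}
    (hP : ∀ z ∈ frontier Tref, toFn P z = 0 ∧ fderiv ℝ (toFn P) z = 0) : bub2 ∣ P := by
  have e0 : toFn (X 0) = Prod.fst := by ext; simp [toFn_apply]
  have e1 : toFn (X 1) = Prod.snd := by ext; simp [toFn_apply]
  have eh : toFn hyp = fun z => 1 - z.1 - z.2 := by ext; simp [toFn_apply, hyp]
  have h0 : X 0 ^ 2 ∣ P := by
    refine sq_dvd_of_vanish (X 0) (X 1) ![0, Polynomial.X] ?_ ?_ ?_ P ?_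
    · intro i; fin_cases i <;> simp
    · intro t; simp [e0]
    · intro z h
      rw [e0, fderiv_fst] at h
      simpa using DFunLike.congr_fun h (1, 0)
    · intro t ht
      refine hP _ (mem_frontier_of_direction (v := (-1, 0)) ?_ ?_)
      · simpa [Tref] using ⟨ht.1.le, ht.2.le⟩
      · intro s hs h
        have := h.1
        simp at this
        linarith
  have h1 : X 1 ^ 2 ∣ P := by
    refine sq_dvd_of_vanish (X 1) (X 0) ![Polynomial.X, 0] ?_ ?_ ?_ P ?_
    · intro i; fin_cases i <;> simp
    · intro t; simp [e1]
    · intro z h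
      rw [e1, fderiv_snd] at h
      simpa using DFunLike.congr_fun h (0, 1)
    · intro t ht
      refine hP _ (mem_frontier_of_direction (v := (0, -1)) ?_ ?_)
      · simpa [Tref] using ⟨ht.1.le, ht.2.le⟩
      · intro s hs h
        have := h.2.1
        simp at this
        linarith
  have hh : hyp ^ 2 ∣ P := by
    refine sq_dvd_of_vanish hyp (X 0) ![Polynomial.X, 1 - Polynomial.X] ?_ ?_ ?_ P ?_
    · intro i
      fin_cases i
      · simp
      · exact ⟨-1, by simp [hyp]⟩
    · intro t; simp [eh]
    · intro z h
      have hd : HasFDerivAt (fun z : ℝ × ℝ => 1 - z.1 - z.2)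
          (0 - ContinuousLinearMap.fst ℝ ℝ ℝ - ContinuousLinearMap.snd ℝ ℝ ℝ) z :=
        ((hasFDerivAt_const (1 : ℝ) z).sub hasFDerivAt_fst).sub hasFDerivAt_snd
      rw [eh, hd.fderiv] at h
      simpa using DFunLike.congr_fun h (1, 0)
    · intro t ht
      refine hP _ (mem_frontier_of_direction (v := (1, 0)) ?_ ?_)
      · simpa [Tref] using ⟨ht.1.le, ht.2.le⟩
      · intro s hs h
        have := h.2.2
        simp at this
        linarith
  have r01 : IsRelPrime (X 0 : MvPolynomial (Fin 2) ℝ) (X 1) :=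
    X_isRelPrime (0, 1) rfl (by simp [e1])
  have r0h : IsRelPrime (X 0) hyp := X_isRelPrime (0, 0) rfl (by simp [eh])
  have r1h : IsRelPrime (X 1) hyp := X_isRelPrime (0, 0) rfl (by simp [eh])
  exact (IsRelPrime.mul_left r0h.pow r1h.pow).mul_dvd (r01.pow.mul_dvd h0 h1) hh

/-- Multiplication by the squared bubble, as a map from cofactors to functions on `ℝ²`. -/
def bubMap (k : ℕ) : cofactors k →ₗ[ℝ] (ℝ × ℝ → ℝ) :=
  toFn ∘ₗ LinearMap.mulLeft ℝ bub2 ∘ₗ (cofactors k).subtype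

lemma bubMap_injective (k : ℕ) : Function.Injective (bubMap k) :=
  toFn_injective.comp ((mul_right_injective₀ bub2_ne_zero).comp Subtype.val_injective)

lemma SigmaI_eq_range (k : ℕ) : SigmaI k = (bubMap k).range := by
  ext φ
  constructor
  · rintro ⟨⟨P, hdeg, hφ⟩, hz⟩
    obtain rfl : φ = toFn P := _root_.funext hφ
    obtain ⟨Q, rfl⟩ := bub2_dvd hz
    exact ⟨⟨Q, (mem_cofactors_iff Q).2 hdeg⟩, rfl⟩
  · rintro ⟨Q, rfl⟩
    exact bub2_mul_mem_SigmaI Q.2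

/-- For `k ≥ 3`, the space `Σ_I(T̂)` has dimension `(k−3)(k−4)/2 = (k² − 7k + 12)/2`. -/
theorem dim_SigmaI (k : ℕ) (hk : 3 ≤ k) :
    Set.finrank ℝ (SigmaI k) = (k - 3) * (k - 4) / 2 := by
  rw [Set.finrank, SigmaI_eq_range, Submodule.span_eq,
    LinearMap.finrank_range_of_inj (bubMap_injective k), finrank_cofactors k hk]
end
end

section
/- Let n, m be positive integers, let A be a symmetric positive definite real n×n matrix, let M be a symmetric positive definite real m×m matrix, let B be a real m×n matrix, and let β > 0. Assume: (boundedness) (qᵀ B v)² ≤ (vᵀ A v)(qᵀ M q) for all v ∈ ℝⁿ and q ∈ ℝᵐ; and (inf-sup) for every q ∈ ℝᵐ with Bᵀq ≠ 0 there exists v ∈ ℝⁿ with (qᵀ B v)² ≥ β² (vᵀ A v)(qᵀ M q) and vᵀ A v > 0. Then every nonzero real λ for which there exists q ≠ 0 with B A⁻¹ Bᵀ q = λ M q satisfies β² ≤ λ ≤ 1. -/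
open Matrix

/-!
Put `w = A⁻¹ Bᵀ q`, so that `A w = Bᵀ q` and `q ⬝ B v = v ⬝ A w` for every `v`: the vector `w`
represents the functional `v ↦ q ⬝ B v` in the inner product of `A`. Testing the eigenvalue
equation with `q` gives `w ⬝ A w = λ (q ⬝ M q)`, and `w ≠ 0` because `λ M q ≠ 0`. Boundedness at
`v = w` yields `λ ≤ 1`. For the lower bound, the Cauchy–Schwarz inequality for `A` bounds
`(q ⬝ B v)² = (v ⬝ A w)²` by `(v ⬝ A v) (w ⬝ A w)`, which is compared with the inf-sup inequality.
-/

/-- Cauchy–Schwarz for the bilinear form of a positive definite matrix. -/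
lemma posDef_cauchy_schwarz {n : ℕ} {A : Matrix (Fin n) (Fin n) ℝ} (hA : A.PosDef)
    (v w : Fin n → ℝ) (hw : 0 < w ⬝ᵥ (A *ᵥ w)) :
    (v ⬝ᵥ (A *ᵥ w)) ^ 2 ≤ (v ⬝ᵥ (A *ᵥ v)) * (w ⬝ᵥ (A *ᵥ w)) := by
  have hT : Aᵀ = A := by simpa using hA.isHermitian.eq
  have hsymm : w ⬝ᵥ (A *ᵥ v) = v ⬝ᵥ (A *ᵥ w) := by
    rw [dotProduct_mulVec, ← mulVec_transpose, hT, dotProduct_comm]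
  set s := w ⬝ᵥ (A *ᵥ w) with hs
  set c := v ⬝ᵥ (A *ᵥ w) with hc
  -- `s • v - c • w` is `s` times the component of `v` that is `A`-orthogonal to `w`.
  have h0 : 0 ≤ (s • v - c • w) ⬝ᵥ (A *ᵥ (s • v - c • w)) := by
    simpa using hA.posSemidef.dotProduct_mulVec_nonneg (s • v - c • w)
  have hexp : (s • v - c • w) ⬝ᵥ (A *ᵥ (s • v - c • w))
      = s * ((v ⬝ᵥ (A *ᵥ v)) * s - c ^ 2) := by
    simp only [mulVec_sub, mulVec_smul, sub_dotProduct, dotProduct_sub, smul_dotProduct,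
      dotProduct_smul, smul_eq_mul, hsymm, ← hs, ← hc]
    ring
  rw [hexp] at h0
  linarith [nonneg_of_mul_nonneg_right h0 hw]

/-- Under boundedness and inf-sup hypotheses with constant `β > 0`, every nonzero generalized
eigenvalue `ev` of the pair `(B A⁻¹ Bᵀ, M)` satisfies `β² ≤ ev ≤ 1`. -/
theorem pressure_schur_eigenvalue_bounds (n m : ℕ) (hn : 0 < n) (hm : 0 < m)
    (A : Matrix (Fin n) (Fin n) ℝ) (hA : A.PosDef)
    (M : Matrix (Fin m) (Fin m) ℝ) (hM : M.PosDef)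
    (B : Matrix (Fin m) (Fin n) ℝ) (β : ℝ) (hβ : 0 < β)
    (hbound : ∀ (v : Fin n → ℝ) (q : Fin m → ℝ),
      (q ⬝ᵥ (B *ᵥ v)) ^ 2 ≤ (v ⬝ᵥ (A *ᵥ v)) * (q ⬝ᵥ (M *ᵥ q)))
    (hinfsup : ∀ q : Fin m → ℝ, Bᵀ *ᵥ q ≠ 0 → ∃ v : Fin n → ℝ,
      β ^ 2 * ((v ⬝ᵥ (A *ᵥ v)) * (q ⬝ᵥ (M *ᵥ q))) ≤ (q ⬝ᵥ (B *ᵥ v)) ^ 2 ∧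
      0 < v ⬝ᵥ (A *ᵥ v))
    (ev : ℝ) (hev : ev ≠ 0) (q : Fin m → ℝ) (hq : q ≠ 0)
    (heig : (B * A⁻¹ * Bᵀ) *ᵥ q = ev • (M *ᵥ q)) :
    β ^ 2 ≤ ev ∧ ev ≤ 1 := by
  have hAdet : IsUnit A.det := hA.det_pos.ne'.isUnit
  have hp : 0 < q ⬝ᵥ (M *ᵥ q) := by simpa using hM.dotProduct_mulVec_pos hq
  obtain ⟨w, hw⟩ : ∃ w, w = A⁻¹ *ᵥ (Bᵀ *ᵥ q) := ⟨_, rfl⟩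
  have hAw : A *ᵥ w = Bᵀ *ᵥ q := by
    rw [hw, mulVec_mulVec, mul_nonsing_inv A hAdet, one_mulVec]
  have hrep (v : Fin n → ℝ) : q ⬝ᵥ (B *ᵥ v) = v ⬝ᵥ (A *ᵥ w) := by
    rw [hAw, dotProduct_mulVec, ← mulVec_transpose, dotProduct_comm]
  have hBw : B *ᵥ w = ev • (M *ᵥ q) := by
    rw [← heig, hw, mulVec_mulVec, mulVec_mulVec, Matrix.mul_assoc]
  have hs : w ⬝ᵥ (A *ᵥ w) = ev * (q ⬝ᵥ (M *ᵥ q)) := by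
    rw [← hrep w, hBw, dotProduct_smul, smul_eq_mul]
  have hw0 : w ≠ 0 := by
    rintro rfl
    rw [mulVec_zero, dotProduct_zero] at hs
    exact mul_ne_zero hev hp.ne' hs.symm
  have hspos : 0 < w ⬝ᵥ (A *ᵥ w) := by simpa using hA.dotProduct_mulVec_pos hw0
  constructor
  · have hBq : Bᵀ *ᵥ q ≠ 0 := by
      rw [← hAw]
      intro h
      simp [h] at hspos
    obtain ⟨v, hv, ha⟩ := hinfsup q hBq
    have hcs := posDef_cauchy_schwarz hA v w hspos
    rw [hrep v] at hv
    rw [hs] at hcs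
    refine le_of_mul_le_mul_right ?_ (mul_pos ha hp)
    linarith
  · have h := hbound w q
    rw [hrep w, sq] at h
    have h' := le_of_mul_le_mul_left h hspos
    rw [hs] at h'
    exact le_of_mul_le_mul_right (by linarith) hp
end

section
/- Let n, m be positive integers. Let Ã be a symmetric positive definite real n×n matrix, B̃ a real m×n matrix, and S = [[Ã, B̃ᵀ],[B̃, 0]] the symmetric (n+m)×(n+m) block matrix. Let Ā (n×n) and M̄ (m×m) be symmetric positive definite and P = [[Ā, 0],[0, M̄]]. Suppose δ, Δ > 0 and θ, Θ ≥ 0 satisfy δ (uᵀ Ā u) ≤ uᵀ Ã u ≤ Δ (uᵀ Ā u) for all u ∈ ℝⁿ, and θ² (qᵀ M̄ q) ≤ qᵀ B̃ Ã⁻¹ B̃ᵀ q ≤ Θ² (qᵀ M̄ q) for all q ∈ ℝᵐ. Then every real λ for which there exists z ∈ ℝⁿ⁺ᵐ, z ≠ 0, with S z = λ P z lies in the set [−Θ², (δ − √(δ² + 4δθ²))/2] ∪ {0} ∪ [δ, (Δ + √(Δ² + 4ΔΘ²))/2]. -/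
/-!
Write an eigenvector as `z = (u, p)`, so that `Ã u + B̃ᵀ p = λ Ā u` and `B̃ u = λ M̄ p`. Put
`s = B̃ᵀ p`, `α = uᵀ Ã u`, `a = uᵀ Ā u`, `k = pᵀ M̄ p` and `t = sᵀ Ã⁻¹ s`. Then `sᵀ u = λ k` and
`α + λ k = λ a`, and the hypotheses read `δ a ≤ α ≤ Δ a` and `θ² k ≤ t ≤ Θ² k`. If `λ ≠ 0`, then
`u ≠ 0`, since `u = 0` forces `k = 0`; hence `α > 0`.

* If `λ > 0`, then `δ a ≤ α ≤ λ a` gives `δ ≤ λ`.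
* The Cauchy-Schwarz inequality `(sᵀ u)² ≤ α t` gives `λ² k ≤ Θ² α`
  (`sq_mul_le_of_dotProduct_eq`). Eliminating `k` yields `λ² ≤ Δ λ + Δ Θ²` when `λ > 0`, and
  `-λ ≤ Θ²` when `λ < 0`.
* If `λ < 0`, substitute `s = λ Ā u - Ã u` into `t` and bound `uᵀ Ā Ã⁻¹ Ā u ≤ a / δ`
  (`mul_inverse_quadratic_le`). This gives `t ≤ α - 2 λ a + λ² a / δ`, from which
  `δ θ² ≤ λ² - δ λ`.

The two quadratic inequalities are then solved for `λ`.
-/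

open Matrix

lemma dotProduct_mulVec_swap {n : ℕ} {A : Matrix (Fin n) (Fin n) ℝ} (hA : A.PosDef)
    (x y : Fin n → ℝ) : x ⬝ᵥ (A *ᵥ y) = y ⬝ᵥ (A *ᵥ x) := by
  have h : Aᵀ = A := by simpa using hA.isHermitian.eq
  rw [dotProduct_mulVec, ← mulVec_transpose, h, dotProduct_comm]

lemma quadratic_pos {n : ℕ} {A : Matrix (Fin n) (Fin n) ℝ} (hA : A.PosDef)
    {x : Fin n → ℝ} (hx : x ≠ 0) : 0 < x ⬝ᵥ (A *ᵥ x) := by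
  simpa using hA.dotProduct_mulVec_pos hx

lemma quadratic_nonneg {n : ℕ} {A : Matrix (Fin n) (Fin n) ℝ} (hA : A.PosDef)
    (x : Fin n → ℝ) : 0 ≤ x ⬝ᵥ (A *ᵥ x) := by
  simpa using hA.posSemidef.dotProduct_mulVec_nonneg x

lemma quadratic_expand {n : ℕ} {A : Matrix (Fin n) (Fin n) ℝ} (hA : A.PosDef)
    (c d : ℝ) (x y : Fin n → ℝ) :
    (c • x - d • y) ⬝ᵥ (A *ᵥ (c • x - d • y))
      = c ^ 2 * (x ⬝ᵥ (A *ᵥ x)) - 2 * c * d * (x ⬝ᵥ (A *ᵥ y)) + d ^ 2 * (y ⬝ᵥ (A *ᵥ y)) := by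
  have h := dotProduct_mulVec_swap hA y x
  simp only [mulVec_sub, mulVec_smul, dotProduct_sub, sub_dotProduct, smul_dotProduct,
    dotProduct_smul, smul_eq_mul, h]
  ring

/-- If `δ Ā ≤ Ã` and `w = Ã⁻¹ Ā u`, then `wᵀ Ã w = uᵀ Ā Ã⁻¹ Ā u` is at most `uᵀ Ā u / δ`:
the order reversal `Ã⁻¹ ≤ Ā⁻¹ / δ` tested on `Ā u`. -/
lemma mul_inverse_quadratic_le {n : ℕ} {A Ab : Matrix (Fin n) (Fin n) ℝ} (hAb : Ab.PosDef)
    {δ : ℝ} (hδ : 0 < δ) (hlow : ∀ u : Fin n → ℝ, δ * (u ⬝ᵥ (Ab *ᵥ u)) ≤ u ⬝ᵥ (A *ᵥ u))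
    {u w : Fin n → ℝ} (hw : A *ᵥ w = Ab *ᵥ u) :
    δ * (w ⬝ᵥ (A *ᵥ w)) ≤ u ⬝ᵥ (Ab *ᵥ u) := by
  have h1 := quadratic_nonneg hAb (δ • w - (1 : ℝ) • u)
  rw [quadratic_expand hAb, ← hw] at h1
  have h2 := mul_le_mul_of_nonneg_left (hlow w) hδ.le
  rw [hw] at h1 ⊢
  rw [hw] at h2
  nlinarith

/-- The Cauchy-Schwarz inequality `(sᵀ u)² ≤ (uᵀ A u) (sᵀ A⁻¹ s)` for `s = A v`, with
`sᵀ u = l k` and `sᵀ A⁻¹ s ≤ Θ² k`, after cancelling `k`. -/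
lemma sq_mul_le_of_dotProduct_eq {n : ℕ} {A : Matrix (Fin n) (Fin n) ℝ} (hA : A.PosDef)
    {u v : Fin n → ℝ} {l k Θ : ℝ} (huv : u ⬝ᵥ (A *ᵥ v) = l * k)
    (hv : v ⬝ᵥ (A *ᵥ v) ≤ Θ ^ 2 * k) :
    l ^ 2 * k ≤ Θ ^ 2 * (u ⬝ᵥ (A *ᵥ u)) := by
  rcases eq_or_ne Θ 0 with rfl | hΘ
  · have hv0 : v = 0 := by
      by_contra h
      have := quadratic_pos hA h
      nlinarith
    subst hv0
    simp only [mulVec_zero, dotProduct_zero] at huv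
    have h : l ^ 2 * k = l * (l * k) := by ring
    rw [h, ← huv]
    simp
  · have hpos : 0 < Θ ^ 2 := by positivity
    have h1 := quadratic_nonneg hA (Θ ^ 2 • u - l • v)
    rw [quadratic_expand hA, huv] at h1
    have h2 := mul_le_mul_of_nonneg_left hv (sq_nonneg l)
    have h3 : 0 ≤ Θ ^ 2 * (Θ ^ 2 * (u ⬝ᵥ (A *ᵥ u)) - l ^ 2 * k) := by nlinarith
    have := nonneg_of_mul_nonneg_right h3 hpos
    linarith

/-- Eigenvalue localization for the block-diagonally preconditioned saddle point matrix:
every generalized eigenvalue of `(S, P)` with `S = [[Ã, B̃ᵀ],[B̃, 0]]` and `P = [[Ā, 0],[0, M̄]]`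
lies in `[−Θ², (δ − √(δ² + 4δθ²))/2] ∪ {0} ∪ [δ, (Δ + √(Δ² + 4ΔΘ²))/2]`. -/
theorem preconditioned_eigenvalue_localization (n m : ℕ) (hn : 0 < n) (hm : 0 < m)
    (Atil : Matrix (Fin n) (Fin n) ℝ) (hAtil : Atil.PosDef)
    (Btil : Matrix (Fin m) (Fin n) ℝ)
    (Abar : Matrix (Fin n) (Fin n) ℝ) (hAbar : Abar.PosDef)
    (Mbar : Matrix (Fin m) (Fin m) ℝ) (hMbar : Mbar.PosDef)
    (δ Δ θ Θ : ℝ) (hδ : 0 < δ) (hΔ : 0 < Δ) (hθ : 0 ≤ θ) (hΘ : 0 ≤ Θ)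
    (hAlow : ∀ u : Fin n → ℝ, δ * (u ⬝ᵥ (Abar *ᵥ u)) ≤ u ⬝ᵥ (Atil *ᵥ u))
    (hAup : ∀ u : Fin n → ℝ, u ⬝ᵥ (Atil *ᵥ u) ≤ Δ * (u ⬝ᵥ (Abar *ᵥ u)))
    (hBlow : ∀ q : Fin m → ℝ,
      θ ^ 2 * (q ⬝ᵥ (Mbar *ᵥ q)) ≤ q ⬝ᵥ ((Btil * Atil⁻¹ * Btilᵀ) *ᵥ q))
    (hBup : ∀ q : Fin m → ℝ,
      q ⬝ᵥ ((Btil * Atil⁻¹ * Btilᵀ) *ᵥ q) ≤ Θ ^ 2 * (q ⬝ᵥ (Mbar *ᵥ q)))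
    (ev : ℝ) (z : Fin n ⊕ Fin m → ℝ) (hz : z ≠ 0)
    (heig : (Matrix.fromBlocks Atil Btilᵀ Btil (0 : Matrix (Fin m) (Fin m) ℝ)) *ᵥ z
      = ev • ((Matrix.fromBlocks Abar 0 0 Mbar) *ᵥ z)) :
    ev ∈ Set.Icc (-Θ ^ 2) ((δ - Real.sqrt (δ ^ 2 + 4 * δ * θ ^ 2)) / 2) ∪ {0} ∪
      Set.Icc δ ((Δ + Real.sqrt (Δ ^ 2 + 4 * Δ * Θ ^ 2)) / 2) := by
  set u : Fin n → ℝ := z ∘ Sum.inl with hu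
  set p : Fin m → ℝ := z ∘ Sum.inr with hp
  have e1 : Atil *ᵥ u + Btilᵀ *ᵥ p = ev • (Abar *ᵥ u) := by
    ext i
    have := congrFun heig (Sum.inl i)
    simpa [fromBlocks_mulVec] using this
  have e2 : Btil *ᵥ u = ev • (Mbar *ᵥ p) := by
    ext i
    have := congrFun heig (Sum.inr i)
    simpa [fromBlocks_mulVec] using this
  have hdet : IsUnit Atil.det := (isUnit_iff_isUnit_det _).1 hAtil.isUnit
  have hinv : ∀ x, Atil *ᵥ (Atil⁻¹ *ᵥ x) = x := fun x => by
    rw [mulVec_mulVec, mul_nonsing_inv _ hdet, one_mulVec]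
  set v := Atil⁻¹ *ᵥ (Btilᵀ *ᵥ p) with hv
  set w := Atil⁻¹ *ᵥ (Abar *ᵥ u) with hw
  have hAv : Atil *ᵥ v = Btilᵀ *ᵥ p := hinv _
  have hAw : Atil *ᵥ w = Abar *ᵥ u := hinv _
  have hBp : ∀ x, x ⬝ᵥ (Btilᵀ *ᵥ p) = p ⬝ᵥ (Btil *ᵥ x) := fun x => by
    rw [mulVec_transpose, dotProduct_comm, dotProduct_mulVec]
  have ht : p ⬝ᵥ ((Btil * Atil⁻¹ * Btilᵀ) *ᵥ p) = v ⬝ᵥ (Atil *ᵥ v) := by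
    rw [hAv, hBp, hv, mulVec_mulVec, mulVec_mulVec, Matrix.mul_assoc]
  have huv : u ⬝ᵥ (Atil *ᵥ v) = ev * (p ⬝ᵥ (Mbar *ᵥ p)) := by
    rw [hAv, hBp, e2, dotProduct_smul, smul_eq_mul]
  have hbal : u ⬝ᵥ (Atil *ᵥ u) + ev * (p ⬝ᵥ (Mbar *ᵥ p)) = ev * (u ⬝ᵥ (Abar *ᵥ u)) := by
    rw [← huv, hAv, ← dotProduct_add, e1, dotProduct_smul, smul_eq_mul]
  have hvw : v = ev • w - (1 : ℝ) • u := by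
    have h : Btilᵀ *ᵥ p = ev • (Abar *ᵥ u) - Atil *ᵥ u := by rw [← e1]; abel
    rw [hv, h, mulVec_sub, mulVec_smul, ← hw, mulVec_mulVec, nonsing_inv_mul _ hdet, one_mulVec,
      one_smul]
  have ht2 : v ⬝ᵥ (Atil *ᵥ v) = ev ^ 2 * (w ⬝ᵥ (Atil *ᵥ w)) - 2 * ev * (u ⬝ᵥ (Abar *ᵥ u))
      + u ⬝ᵥ (Atil *ᵥ u) := by
    rw [hvw, quadratic_expand hAtil, dotProduct_mulVec_swap hAtil w u, hAw]
    ring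
  have hc := mul_inverse_quadratic_le hAbar hδ hAlow hAw
  have hlo := hBlow p
  have hup := hBup p
  rw [ht] at hlo hup
  have hcs := sq_mul_le_of_dotProduct_eq hAtil huv hup
  have hal := hAlow u
  have hau := hAup u
  have hk0 := quadratic_nonneg hMbar p
  rcases eq_or_ne ev 0 with h0 | h0
  · exact Or.inl (Or.inr h0)
  have hune : u ≠ 0 := by
    intro hu0
    have hpne : p ≠ 0 := by
      intro hp0
      apply hz
      ext i
      rcases i with i | i
      · exact congrFun hu0 i
      · exact congrFun hp0 i
    have hk := quadratic_pos hMbar hpne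
    simp only [hu0, mulVec_zero, dotProduct_zero, mul_zero, zero_add] at hbal
    exact (mul_ne_zero h0 hk.ne') hbal
  have hα := quadratic_pos hAtil hune
  have ha := quadratic_pos hAbar hune
  clear_value u p v w
  generalize u ⬝ᵥ (Atil *ᵥ u) = α at *
  generalize u ⬝ᵥ (Abar *ᵥ u) = a at *
  generalize p ⬝ᵥ (Mbar *ᵥ p) = k at *
  generalize v ⬝ᵥ (Atil *ᵥ v) = t at *
  generalize w ⬝ᵥ (Atil *ᵥ w) = c at *
  rcases lt_or_gt_of_ne h0 with hneg | hpos
  · refine Or.inl (Or.inl ⟨?_, ?_⟩)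
    · have hk : 0 < k := by
        by_contra h
        have : k = 0 := le_antisymm (not_lt.1 h) hk0
        subst this
        nlinarith
      -- Multiplying `α ≤ -λ k` by `Θ²` and combining with `λ² k ≤ Θ² α` leaves a factor `-λ k > 0`.
      have h1 : α ≤ -ev * k := by nlinarith
      have h2 := mul_le_mul_of_nonneg_left h1 (sq_nonneg Θ)
      have h3 : 0 ≤ (-ev * k) * (Θ ^ 2 + ev) := by nlinarith
      have h4 : 0 < -ev * k := mul_pos (neg_pos.2 hneg) hk
      have := nonneg_of_mul_nonneg_right h3 h4
      linarith
    · have hq : δ * θ ^ 2 ≤ ev ^ 2 - δ * ev := by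
        -- Both sides are compared after multiplication by `-λ k = α - λ a > 0`.
        have h4 : 0 < α - ev * a := by nlinarith
        have h1 : δ * t ≤ ev ^ 2 * a - 2 * ev * δ * a + δ * α := by
          have := mul_le_mul_of_nonneg_left hc (sq_nonneg ev)
          rw [ht2]
          nlinarith
        have h2 : δ * θ ^ 2 * k ≤ ev ^ 2 * a - 2 * ev * δ * a + δ * α := by
          have := mul_le_mul_of_nonneg_left hlo hδ.le
          linarith
        have h3 := mul_le_mul_of_nonneg_left h2 (neg_pos.2 hneg).le
        have h5 : δ * θ ^ 2 * (α - ev * a) = -ev * (δ * θ ^ 2 * k) := by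
          have : α - ev * a = -ev * k := by linarith
          rw [this]; ring
        have h6 := mul_le_mul_of_nonneg_left hal (sq_nonneg ev)
        refine le_of_mul_le_mul_right ?_ h4
        rw [h5]
        nlinarith
      have : Real.sqrt (δ ^ 2 + 4 * δ * θ ^ 2) ≤ δ - 2 * ev := by
        apply Real.sqrt_le_iff.2
        constructor <;> nlinarith
      linarith
  · refine Or.inr ⟨?_, ?_⟩
    · have h1 : δ * a ≤ ev * a := by nlinarith [mul_nonneg hpos.le hk0]
      exact le_of_mul_le_mul_right h1 ha
    · have hq : ev ^ 2 ≤ Δ * ev + Δ * Θ ^ 2 := by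
        -- Multiplying `α + λ k = λ a` by `λ Δ` and using `α ≤ Δ a` leaves a common factor `α`.
        have h1 := mul_le_mul_of_nonneg_left hau (sq_nonneg ev)
        have h2 := mul_le_mul_of_nonneg_left hcs hΔ.le
        have h3 : ev * Δ * (α + ev * k) = ev * Δ * (ev * a) := by rw [hbal]
        refine le_of_mul_le_mul_right ?_ hα
        nlinarith
      have : 2 * ev - Δ ≤ Real.sqrt (Δ ^ 2 + 4 * Δ * Θ ^ 2) := by
        apply Real.le_sqrt_of_sq_le
        nlinarith
      linarith
end

section
/- There exists a constant C > 0 such that for every integer k ≥ 1 and every real polynomial function p on ℝ² of total degree at most k, the value at the vertex (0,0) of the reference triangle satisfies |p(0,0)|² ≤ C k⁴ ∫_{T̂} p². -/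
/-! In the collapsed coordinates `(x, y) = (s t, s (1 - t))` the triangle is a union of segments
issued from the vertex `(0, 0)`, with Jacobian `s`. On each segment the polynomial restricts to a
polynomial `q` of degree at most `k` in `s` with `q(0) = p(0, 0)`, so the estimate follows by
integrating over `t` the one-dimensional inequality
`q(0)² ≤ (k+1)² (k+2)² / 2 * ∫₀¹ s q(s)² ds` (`weighted_value_bound`, `integral_duffy_le`).

That inequality is Cauchy–Schwarz for the kernel `K` that reproduces the value at `0` in the
weighted inner product `∫₀¹ s f g`: its constant is `∫₀¹ s K² = K(0)`. The coefficients of `K`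
come from a partial fraction expansion, that is, from Lagrange interpolation at the nodes
`-(j + 2)` (`exists_kernel_coeff`, `exists_kernel`). -/

open MeasureTheory Matrix

noncomputable section

/-- Coefficients of the reproducing kernel at `0` for polynomials of degree at most `k` and the
weight `s` on `[0, 1]`. They are characterised by the partial fraction expansion
`∑ j, c j / (z + j + 2) = (-1)^k (k+1) (k+2) ∏_{m=1}^k (z - m) / ∏_{j=0}^k (z + j + 2)`,
whose left side at `z = m` is the weighted moment `∫ s * K(s) * s^m`. -/
theorem exists_kernel_coeff (k : ℕ) : ∃ c : ℕ → ℝ,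
    (∀ m ≤ k, ∑ j ∈ Finset.range (k + 1), c j / ((j : ℝ) + m + 2) = if m = 0 then 1 else 0) ∧
    c 0 = ((k : ℝ) + 1) ^ 2 * (k + 2) ^ 2 / 2 := by
  set A : ℝ := (-1) ^ k * ((k + 1) * (k + 2)) with hA
  set v : ℕ → ℝ := fun j => -((j : ℝ) + 2) with hv
  set N : Polynomial ℝ :=
    Polynomial.C A * ∏ m ∈ Finset.range k, (Polynomial.X - Polynomial.C ((m : ℝ) + 1)) with hN
  have hNe : ∀ x, N.eval x = A * ∏ m ∈ Finset.range k, (x - ((m : ℝ) + 1)) := by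
    intro x; simp [hN, Polynomial.eval_prod]
  have hA0 : A ≠ 0 := by rw [hA]; positivity
  have hdeg : N.degree < (Finset.range (k + 1)).card := by
    rw [hN, Polynomial.degree_C_mul hA0, Polynomial.degree_prod]
    simp only [Polynomial.degree_X_sub_C]
    simp
    exact_mod_cast Nat.lt_succ_self k
  have hinj : Set.InjOn v (Finset.range (k + 1)) := by
    intro a _ b _ h
    simp only [hv] at h
    exact_mod_cast (by linarith : (a : ℝ) = b)
  have hI := Lagrange.eq_interpolate_of_eval_eq (r := fun j => N.eval (v j)) hinj hdeg
    (fun i _ => rfl)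
  refine ⟨fun j => Lagrange.nodalWeight (Finset.range (k + 1)) v j * N.eval (v j), ?_, ?_⟩
  · intro m hm
    have hx : ∀ i ∈ Finset.range (k + 1), (m : ℝ) ≠ v i := by
      intro i _ h
      simp only [hv] at h
      have : (0 : ℝ) ≤ m := by positivity
      have : (0 : ℝ) ≤ i := by positivity
      linarith
    have h := Lagrange.eval_interpolate_not_at_node (r := fun j => N.eval (v j)) hx
    rw [← hI, Lagrange.eval_nodal] at h
    have hprod : (∏ i ∈ Finset.range (k + 1), ((m : ℝ) - v i)) ≠ 0 :=
      Finset.prod_ne_zero_iff.2 fun i hi => sub_ne_zero.2 (hx i hi)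
    have hs : ∑ j ∈ Finset.range (k + 1),
        Lagrange.nodalWeight (Finset.range (k + 1)) v j * N.eval (v j) / ((j : ℝ) + m + 2)
        = N.eval (m : ℝ) / ∏ i ∈ Finset.range (k + 1), ((m : ℝ) - v i) := by
      rw [h, mul_div_cancel_left₀ _ hprod]
      refine Finset.sum_congr rfl fun i _ => ?_
      have : (m : ℝ) - v i = i + m + 2 := by simp only [hv]; ring
      rw [this]; ring
    rw [hs, hNe]
    split_ifs with h0
    · subst h0
      have h1 : ∏ i ∈ Finset.range k, (((0 : ℕ) : ℝ) - ((i : ℝ) + 1)) = (-1) ^ k * (k.factorial : ℝ) := by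
        rw [← Finset.prod_range_add_one_eq_factorial]
        push_cast
        rw [← Finset.card_range k, ← Finset.prod_const, Finset.card_range,
          ← Finset.prod_mul_distrib]
        exact Finset.prod_congr rfl fun i _ => by ring
      have h2 : ∏ i ∈ Finset.range (k + 1), (((0 : ℕ) : ℝ) - v i) = ((k + 2).factorial : ℝ) := by
        rw [← Finset.prod_range_add_one_eq_factorial, Finset.prod_range_succ' _ (k + 1)]
        push_cast
        rw [mul_one]
        exact Finset.prod_congr rfl fun i _ => by simp only [hv]; ring
      rw [h1, h2, hA, Nat.factorial_succ, Nat.factorial_succ]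
      have hs : ((-1 : ℝ) ^ k) * (-1) ^ k = 1 := by rw [← mul_pow]; norm_num
      have hf : (k.factorial : ℝ) ≠ 0 := by positivity
      push_cast
      rw [div_eq_one_iff_eq (by positivity)]
      linear_combination ((k + 1) * (k + 2) * (k.factorial : ℝ)) * hs
    -- for `1 ≤ m ≤ k` the numerator vanishes through its factor of index `m - 1`
    · have : ∏ i ∈ Finset.range k, ((m : ℝ) - ((i : ℝ) + 1)) = 0 := by
        refine Finset.prod_eq_zero (i := m - 1) (Finset.mem_range.2 (by omega)) ?_
        rw [Nat.cast_sub (by omega)]; simp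
      rw [this]; simp
  · have h1 : Lagrange.nodalWeight (Finset.range (k + 1)) v 0 = (k.factorial : ℝ)⁻¹ := by
      rw [Lagrange.nodalWeight, ← Finset.prod_range_add_one_eq_factorial,
        Finset.prod_inv_distrib]
      have he : (Finset.range (k + 1)).erase 0 = (Finset.range k).image (· + 1) := by
        ext i
        simp only [Finset.mem_erase, Finset.mem_range, Finset.mem_image]
        constructor
        · rintro ⟨a, b⟩; exact ⟨i - 1, by omega, by omega⟩
        · rintro ⟨a, b, rfl⟩; omega
      rw [he, Finset.prod_image (fun a _ b _ h => by simpa using h)]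
      push_cast
      congr 1
      exact Finset.prod_congr rfl fun i _ => by simp only [hv]; push_cast; ring
    have h2 : 2 * ∏ i ∈ Finset.range k, (v 0 - ((i : ℝ) + 1))
        = (-1) ^ k * ((k + 2).factorial : ℝ) := by
      rw [← Finset.prod_range_add_one_eq_factorial, Finset.prod_range_succ',
        Finset.prod_range_succ', ← Finset.card_range k, ← Finset.prod_const, Finset.card_range]
      push_cast
      have : ∏ i ∈ Finset.range k, (v 0 - ((i : ℝ) + 1))
          = (∏ i ∈ Finset.range k, (-1 : ℝ)) * ∏ i ∈ Finset.range k, ((i : ℝ) + 1 + 1 + 1) := by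
        rw [← Finset.prod_mul_distrib]
        exact Finset.prod_congr rfl fun i _ => by simp only [hv]; push_cast; ring
      rw [this]; ring
    rw [Nat.factorial_succ, Nat.factorial_succ] at h2
    push_cast at h2
    beta_reduce
    rw [h1, hNe, hA]
    have hs : ((-1 : ℝ) ^ k) * (-1) ^ k = 1 := by rw [← mul_pow]; norm_num
    have hf : (k.factorial : ℝ) ≠ 0 := by positivity
    rw [inv_mul_eq_div, div_eq_iff hf]
    linear_combination ((-1) ^ k * ((k + 1) * (k + 2)) / 2) * h2 +
      ((k + 1) ^ 2 * (k + 2) ^ 2 / 2 * (k.factorial : ℝ)) * hs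

/-- The polynomial `K` represents evaluation at `0` on polynomials of degree at most `k`, for the
inner product with weight `s` on `[0, 1]`. -/
theorem exists_kernel (k : ℕ) : ∃ K : Polynomial ℝ, K.natDegree ≤ k ∧
    K.eval 0 = ((k : ℝ) + 1) ^ 2 * (k + 2) ^ 2 / 2 ∧
    ∀ q : Polynomial ℝ, q.natDegree ≤ k →
      ∫ s in (0 : ℝ)..1, s * (K.eval s * q.eval s) = q.eval 0 := by
  obtain ⟨c, hc, hc0⟩ := exists_kernel_coeff k
  refine ⟨∑ j ∈ Finset.range (k + 1), Polynomial.C (c j) * Polynomial.X ^ j, ?_, ?_, ?_⟩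
  · refine Polynomial.natDegree_sum_le_of_forall_le _ _ fun i hi => ?_
    exact (Polynomial.natDegree_C_mul_X_pow_le _ _).trans
      (Nat.lt_succ_iff.1 (Finset.mem_range.1 hi))
  · rw [← hc0, Polynomial.eval_finsetSum, Finset.sum_range_succ']
    simp
  · intro q hq
    have hqe : ∀ s, q.eval s = ∑ m ∈ Finset.range (k + 1), q.coeff m * s ^ m := fun s =>
      Polynomial.eval_eq_sum_range' (Nat.lt_succ_iff.2 hq) s
    have hexp : ∀ s : ℝ, s * ((∑ j ∈ Finset.range (k + 1),
        Polynomial.C (c j) * Polynomial.X ^ j : Polynomial ℝ).eval s * q.eval s)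
        = ∑ m ∈ Finset.range (k + 1), ∑ j ∈ Finset.range (k + 1),
          q.coeff m * c j * s ^ (j + m + 1) := by
      intro s
      rw [hqe, Polynomial.eval_finsetSum, Finset.sum_mul_sum, Finset.sum_comm, Finset.mul_sum]
      refine Finset.sum_congr rfl fun m _ => ?_
      rw [Finset.mul_sum]
      refine Finset.sum_congr rfl fun j _ => ?_
      simp only [Polynomial.eval_mul, Polynomial.eval_C, Polynomial.eval_pow, Polynomial.eval_X]
      ring
    simp_rw [hexp]
    rw [intervalIntegral.integral_finsetSum
      (fun m _ => Continuous.intervalIntegrable (by fun_prop) _ _)]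
    have hin : ∀ m ∈ Finset.range (k + 1), ∫ s in (0 : ℝ)..1, ∑ j ∈ Finset.range (k + 1),
          q.coeff m * c j * s ^ (j + m + 1) = q.coeff m * if m = 0 then 1 else 0 := by
      intro m hm
      rw [intervalIntegral.integral_finsetSum
        (fun m _ => Continuous.intervalIntegrable (by fun_prop) _ _),
        ← hc m (Nat.lt_succ_iff.1 (Finset.mem_range.1 hm)), Finset.mul_sum]
      refine Finset.sum_congr rfl fun j _ => ?_
      rw [intervalIntegral.integral_const_mul, integral_pow]
      push_cast
      simp
      ring
    rw [Finset.sum_congr rfl hin]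
    simp [Polynomial.coeff_zero_eq_eval_zero]

/-- The one-dimensional estimate, with the sharp constant: the Cauchy–Schwarz inequality applied to
`q(0) = ∫ s * K(s) * q(s)`. -/
theorem weighted_value_bound (k : ℕ) (q : Polynomial ℝ) (hq : q.natDegree ≤ k) :
    q.eval 0 ^ 2 ≤ (((k : ℝ) + 1) ^ 2 * (k + 2) ^ 2 / 2) *
      ∫ s in (0 : ℝ)..1, s * q.eval s ^ 2 := by
  obtain ⟨K, hK, hK0, hrep⟩ := exists_kernel k
  set c : ℝ := ((k : ℝ) + 1) ^ 2 * (k + 2) ^ 2 / 2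
  have hc : 0 < c := by positivity
  set a := q.eval 0
  have hKK := hrep K hK
  have hKq := hrep q hq
  rw [hK0] at hKK
  have hint : ∀ f : ℝ → ℝ, Continuous f → IntervalIntegrable f volume 0 1 :=
    fun f hf => hf.intervalIntegrable _ _
  -- the square completing Cauchy–Schwarz is integrated against the weight
  have hnn : 0 ≤ ∫ s in (0 : ℝ)..1, s * (a * K.eval s - c * q.eval s) ^ 2 :=
    intervalIntegral.integral_nonneg zero_le_one fun s hs => mul_nonneg hs.1 (sq_nonneg _)
  have hexp : ∫ s in (0 : ℝ)..1, s * (a * K.eval s - c * q.eval s) ^ 2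
      = a ^ 2 * c - 2 * a * c * a + c ^ 2 * ∫ s in (0 : ℝ)..1, s * q.eval s ^ 2 := by
    have : ∀ s : ℝ, s * (a * K.eval s - c * q.eval s) ^ 2
        = a ^ 2 * (s * (K.eval s * K.eval s)) - 2 * a * c * (s * (K.eval s * q.eval s))
          + c ^ 2 * (s * q.eval s ^ 2) := fun s => by ring
    simp_rw [this]
    rw [intervalIntegral.integral_add (hint _ (by fun_prop)) (hint _ (by fun_prop)),
      intervalIntegral.integral_sub (hint _ (by fun_prop)) (hint _ (by fun_prop)),
      intervalIntegral.integral_const_mul, intervalIntegral.integral_const_mul,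
      intervalIntegral.integral_const_mul, hKK, hKq]
  rw [hexp] at hnn
  have : 0 ≤ c * (c * (∫ s in (0 : ℝ)..1, s * q.eval s ^ 2) - a ^ 2) := by linarith
  linarith [nonneg_of_mul_nonneg_right this hc]

/-- The collapsed coordinates `(t, s) ↦ (s t, s (1 - t))`, which blow up the vertex `(0, 0)` of the
triangle to an edge of the square. -/
def duffy (z : ℝ × ℝ) : ℝ × ℝ := (z.2 * z.1, z.2 * (1 - z.1))

/-- The Jacobian of the collapsed coordinates is `s`, and the integrand is nonnegative, so it
suffices that the image of the open square lies in the triangle. -/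
theorem integral_duffy_le (f : ℝ × ℝ → ℝ) (hf : Continuous f) (h0 : ∀ z, 0 ≤ f z) :
    ∫ z in Set.Ioo (0 : ℝ) 1 ×ˢ Set.Ioo (0 : ℝ) 1, z.2 * f (duffy z) ≤ ∫ z in Tref, f z := by
  set S : Set (ℝ × ℝ) := Set.Ioo (0 : ℝ) 1 ×ˢ Set.Ioo (0 : ℝ) 1 with hS
  set D : ℝ × ℝ → (ℝ × ℝ →L[ℝ] ℝ × ℝ) := fun z =>
    (Matrix.toLin (.finTwoProd ℝ) (.finTwoProd ℝ)
      !![z.2, z.1; -z.2, 1 - z.1]).toContinuousLinearMap with hD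
  have hSm : MeasurableSet S := measurableSet_Ioo.prod measurableSet_Ioo
  have hder : ∀ z ∈ S, HasFDerivWithinAt duffy (D z) S z := by
    intro z _
    refine HasFDerivAt.hasFDerivWithinAt ?_
    simp only [hD]
    rw [Matrix.toLin_finTwoProd_toContinuousLinearMap]
    refine HasFDerivAt.prodMk ?_ ?_
    · refine (hasFDerivAt_snd.mul hasFDerivAt_fst).congr_fderiv ?_
      ext <;> simp
    · refine (hasFDerivAt_snd.mul (hasFDerivAt_fst.const_sub 1)).congr_fderiv ?_
      ext <;> simp
  have hinj : Set.InjOn duffy S := by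
    rintro ⟨t, s⟩ ⟨_, hs⟩ ⟨t', s'⟩ _ h
    simp only [duffy, Prod.mk.injEq] at h
    have hss : s = s' := by linarith [h.1, h.2]
    subst hss
    have := mul_left_cancel₀ (ne_of_gt hs.1) h.1
    rw [this]
  have hdet : ∀ z ∈ S, |(D z).det| • f (duffy z) = z.2 * f (duffy z) := by
    rintro z hz
    have : (D z).det = z.2 := by
      simp only [hD, LinearMap.det_toContinuousLinearMap, LinearMap.det_toLin,
        Matrix.det_fin_two_of]
      ring
    rw [this, abs_of_pos hz.2.1, smul_eq_mul]
  have hchg := integral_image_eq_integral_abs_det_fderiv_smul volume hSm hder hinj f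
  rw [setIntegral_congr_fun hSm hdet] at hchg
  rw [← hchg]
  have hsub : duffy '' S ⊆ Tref := by
    rintro _ ⟨⟨t, s⟩, ⟨ht, hs⟩, rfl⟩
    simp only [Set.mem_Ioo] at ht hs
    refine ⟨mul_nonneg hs.1.le ht.1.le, mul_nonneg hs.1.le (by linarith), ?_⟩
    simp only [duffy]
    linarith
  have hcpt : IsCompact Tref := by
    have hcl : IsClosed Tref :=
      (isClosed_le continuous_const continuous_fst).inter
        ((isClosed_le continuous_const continuous_snd).inter
          (isClosed_le (continuous_fst.add continuous_snd) continuous_const))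
    refine (isCompact_Icc (a := ((0 : ℝ), (0 : ℝ))) (b := (1, 1))).of_isClosed_subset hcl ?_
    rintro ⟨x, y⟩ ⟨hx, hy, hxy⟩
    simp only at hx hy hxy
    exact ⟨⟨hx, hy⟩, ⟨by simp only; linarith, by simp only; linarith⟩⟩
  exact setIntegral_mono_set (hf.continuousOn.integrableOn_compact hcpt)
    (Filter.Eventually.of_forall h0) hsub.eventuallyLE

/-- There is a constant `C > 0`, independent of `k` and `p`, such that for every `k ≥ 1` and
every polynomial function `p` of total degree at most `k`, `|p(0,0)|² ≤ C k⁴ ∫_{T̂} p²`. -/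
theorem vertex_value_bound :
    ∃ C : ℝ, 0 < C ∧ ∀ k : ℕ, 1 ≤ k → ∀ p ∈ PolyFun k,
      (p (0, 0)) ^ 2 ≤ C * (k : ℝ) ^ 4 * ∫ z in Tref, (p z) ^ 2 := by
  refine ⟨18, by norm_num, fun k hk p hp => ?_⟩
  obtain ⟨P, hP, hpP⟩ := hp
  have hpc : Continuous p := by
    have : p = fun z : ℝ × ℝ => MvPolynomial.eval ![z.1, z.2] P := funext hpP
    rw [this]
    refine (MvPolynomial.continuous_eval P).comp (continuous_pi fun i => ?_)
    fin_cases i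
    · exact continuous_fst
    · exact continuous_snd
  set c : ℝ := ((k : ℝ) + 1) ^ 2 * (k + 2) ^ 2 / 2 with hcdef
  have hc : 0 < c := by positivity
  have hray : ∀ t : ℝ,
      p (0, 0) ^ 2 / c ≤ ∫ s in Set.Ioo (0 : ℝ) 1, s * p (duffy (t, s)) ^ 2 := by
    intro t
    let q : Polynomial ℝ := MvPolynomial.aeval
      ![Polynomial.C t * Polynomial.X, Polynomial.C (1 - t) * Polynomial.X] P
    have hqd : q.natDegree ≤ k := by
      have := MvPolynomial.aeval_natDegree_le (m := k) (n := 1) P hP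
        ![Polynomial.C t * Polynomial.X, Polynomial.C (1 - t) * Polynomial.X] (by
          intro i
          fin_cases i
          · exact (Polynomial.natDegree_C_mul_le _ _).trans Polynomial.natDegree_X_le
          · exact (Polynomial.natDegree_C_mul_le _ _).trans Polynomial.natDegree_X_le)
      rwa [mul_one] at this
    have hqe : ∀ s, q.eval s = p (duffy (t, s)) := by
      intro s
      rw [hpP, ← Polynomial.coe_evalRingHom]
      simp only [q, MvPolynomial.aeval_def, MvPolynomial.eval₂_eq', MvPolynomial.eval_eq',
        map_sum, map_mul, map_prod, map_pow]
      refine Finset.sum_congr rfl fun d _ => ?_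
      simp only [Fin.prod_univ_two, duffy, Matrix.cons_val_zero, Matrix.cons_val_one,
        Polynomial.algebraMap_eq, Polynomial.coe_evalRingHom, Polynomial.eval_mul,
        Polynomial.eval_C, Polynomial.eval_X, mul_comm s]
    have hb := weighted_value_bound k q hqd
    simp only [hqe] at hb
    rw [intervalIntegral.integral_of_le zero_le_one, integral_Ioc_eq_integral_Ioo] at hb
    rw [div_le_iff₀' hc]
    simpa [duffy] using hb
  have hduf : Continuous duffy := by unfold duffy; fun_prop
  have hle := integral_duffy_le (fun z => p z ^ 2) (hpc.pow 2) (fun z => sq_nonneg _)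
  have hint : IntegrableOn (fun z : ℝ × ℝ => z.2 * p (duffy z) ^ 2)
      (Set.Ioo (0 : ℝ) 1 ×ˢ Set.Ioo (0 : ℝ) 1) (volume.prod volume) := by
    have : Continuous (fun z : ℝ × ℝ => z.2 * p (duffy z) ^ 2) :=
      continuous_snd.mul ((hpc.comp hduf).pow 2)
    exact (this.continuousOn.integrableOn_compact (isCompact_Icc.prod isCompact_Icc)).mono_set
      (Set.prod_mono Set.Ioo_subset_Icc_self Set.Ioo_subset_Icc_self)
  rw [Measure.volume_eq_prod, setIntegral_prod _ hint, ← Measure.volume_eq_prod] at hle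
  have hint' := hint
  rw [IntegrableOn, ← Measure.prod_restrict] at hint'
  have hmono : ∫ _ in Set.Ioo (0 : ℝ) 1, p (0, 0) ^ 2 / c
      ≤ ∫ t in Set.Ioo (0 : ℝ) 1, ∫ s in Set.Ioo (0 : ℝ) 1, s * p (duffy (t, s)) ^ 2 :=
    integral_mono (integrable_const _) hint'.integral_prod_left hray
  have hfin : p (0, 0) ^ 2 / c ≤ ∫ z in Tref, p z ^ 2 := by
    refine le_trans ?_ (hmono.trans hle)
    simp
  rw [div_le_iff₀' hc] at hfin
  refine hfin.trans (mul_le_mul_of_nonneg_right ?_ (integral_nonneg fun z => sq_nonneg _))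
  have hk1 : (1 : ℝ) ≤ k := by exact_mod_cast hk
  -- `k + 1 ≤ 2 k` and `k + 2 ≤ 3 k` give the constant `2² · 3² / 2 = 18`
  have h1 : ((k : ℝ) + 1) ^ 2 ≤ (2 * k) ^ 2 := by gcongr; linarith
  have h2 : ((k : ℝ) + 2) ^ 2 ≤ (3 * k) ^ 2 := by gcongr; linarith
  have h3 := mul_le_mul h1 h2 (by positivity) (by positivity)
  rw [hcdef]
  linarith
end
end
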